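/- arXiv:2008.05558 — 9 statements merged into one kernel-verified Lean document; each statement's English description precedes it below -/
import Mathlib

section
/- Let G be a graph on n vertices with adjacency matrix A and clique number ω(G). Then the maximum value of x^T A x over the standard simplex Δ_n = {x ∈ ℝ^n : x ≥ 0, Σ_i x_i = 1} equals 1 - 1/ω(G). (Motzkin–Straus theorem.) -/
open Matrix
open scoped RealInnerProductSpace

/-- The stability (independence) number of a graph: the size of the largest set of
pairwise non-adjacent vertices. -/
noncomputable def stabilityNumber {V : Type*} (G : SimpleGraph V) : ℕ :=
  sSup {k | ∃ s : Finset V, s.card = k ∧ ∀ i ∈ s, ∀ j ∈ s, i ≠ j → ¬ G.Adj i j}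

/-- The matrix `M_{A,k} = k A + k I - J`, where `J` is the all-ones matrix. -/
noncomputable def MAk {n : ℕ} (A : Matrix (Fin n) (Fin n) ℝ) (k : ℝ) : Matrix (Fin n) (Fin n) ℝ :=
  k • A + k • (1 : Matrix (Fin n) (Fin n) ℝ) - Matrix.of (fun _ _ => (1 : ℝ))

/-- Entrywise square of a vector. -/
def vsq {n : ℕ} (x : Fin n → ℝ) : Fin n → ℝ := fun i => (x i) ^ 2

/-- A symmetric matrix `M` is copositive if `xᵀ M x ≥ 0` for all entrywise nonnegative `x`. -/
def Copositive {n : ℕ} (M : Matrix (Fin n) (Fin n) ℝ) : Prop :=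
  ∀ x : Fin n → ℝ, (∀ i, 0 ≤ x i) → 0 ≤ x ⬝ᵥ M.mulVec x

/-- The quartic form `p_M(x) = (x²)ᵀ M (x²)`. -/
noncomputable def quarticForm {n : ℕ} (M : Matrix (Fin n) (Fin n) ℝ) :
    EuclideanSpace ℝ (Fin n) → ℝ :=
  fun x => vsq x ⬝ᵥ M.mulVec (vsq x)

/-- The quadratic form `q_M(x) = xᵀ M x`. -/
noncomputable def quadForm {n : ℕ} (M : Matrix (Fin n) (Fin n) ℝ) :
    EuclideanSpace ℝ (Fin n) → ℝ :=
  fun x => x ⬝ᵥ M.mulVec x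

/-- `xm` is a local minimizer of `f` over `Ω`: `xm ∈ Ω` and there is `ε > 0` such that
`f xm ≤ f x` for all `x ∈ Ω` with `‖x - xm‖ ≤ ε` (Euclidean norm). -/
def IsLocalMinimizer {n : ℕ} (f : EuclideanSpace ℝ (Fin n) → ℝ)
    (Ω : Set (EuclideanSpace ℝ (Fin n))) (xm : EuclideanSpace ℝ (Fin n)) : Prop :=
  xm ∈ Ω ∧ ∃ ε > 0, ∀ x ∈ Ω, ‖x - xm‖ ≤ ε → f xm ≤ f x

/-- `xm` is a strict local minimizer of `f` over `Ω`: `xm ∈ Ω` and there is `ε > 0` such that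
`f xm < f x` for all `x ∈ Ω` with `x ≠ xm` and `‖x - xm‖ ≤ ε` (Euclidean norm). -/
def IsStrictLocalMinimizer {n : ℕ} (f : EuclideanSpace ℝ (Fin n) → ℝ)
    (Ω : Set (EuclideanSpace ℝ (Fin n))) (xm : EuclideanSpace ℝ (Fin n)) : Prop :=
  xm ∈ Ω ∧ ∃ ε > 0, ∀ x ∈ Ω, x ≠ xm → ‖x - xm‖ ≤ ε → f xm < f x

lemma ms_clique_val {n : ℕ} (G : SimpleGraph (Fin n)) [DecidableRel G.Adj] (x : Fin n → ℝ)
    (hx : ∑ i, x i = 1) (h : ∀ i j, x i ≠ 0 → x j ≠ 0 → i ≠ j → G.Adj i j) :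
    x ⬝ᵥ (G.adjMatrix ℝ).mulVec x = 1 - ∑ i, x i ^ 2 := by
  have h1 : ∀ i j, x i * (G.adjMatrix ℝ i j * x j)
      = x i * x j - if i = j then x i * x j else 0 := by
    intro i j
    by_cases hij : i = j
    · subst hij; simp
    · by_cases hi : x i = 0
      · simp [hi]
      by_cases hj : x j = 0
      · simp [hj]
      simp [hij, h i j hi hj hij]
  simp only [dotProduct, mulVec, Finset.mul_sum, h1, Finset.sum_sub_distrib]
  simp only [← Finset.mul_sum, hx, Finset.sum_ite_eq, Finset.mem_univ, if_true, mul_one, sq]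

lemma ms_shift {n : ℕ} (G : SimpleGraph (Fin n)) [DecidableRel G.Adj] (x : Fin n → ℝ)
    (i j : Fin n) (hij : ¬ G.Adj i j) (t : ℝ) :
    (x + t • (Pi.single i 1 - Pi.single j 1)) ⬝ᵥ
      (G.adjMatrix ℝ).mulVec (x + t • (Pi.single i 1 - Pi.single j 1))
    = x ⬝ᵥ (G.adjMatrix ℝ).mulVec x
      + 2 * t * ((G.adjMatrix ℝ).mulVec x i - (G.adjMatrix ℝ).mulVec x j) := by
  have hs : ∀ v : Fin n → ℝ, x ⬝ᵥ (G.adjMatrix ℝ).mulVec v = v ⬝ᵥ (G.adjMatrix ℝ).mulVec x := by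
    intro v
    rw [dotProduct_mulVec, dotProduct_comm, ← mulVec_transpose, SimpleGraph.transpose_adjMatrix]
  have hji : ¬ G.Adj j i := fun h => hij h.symm
  have hd : (Pi.single i 1 - Pi.single j 1 : Fin n → ℝ) ⬝ᵥ
      (G.adjMatrix ℝ).mulVec (Pi.single i 1 - Pi.single j 1) = 0 := by
    simp [mulVec_sub, sub_dotProduct, hij, hji]
  have hl : (Pi.single i 1 - Pi.single j 1 : Fin n → ℝ) ⬝ᵥ (G.adjMatrix ℝ).mulVec x
      = (G.adjMatrix ℝ).mulVec x i - (G.adjMatrix ℝ).mulVec x j := by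
    simp only [sub_dotProduct, single_dotProduct, one_mul]
  rw [mulVec_add, mulVec_smul, add_dotProduct, dotProduct_add, dotProduct_add, dotProduct_smul,
    smul_dotProduct, smul_dotProduct, dotProduct_smul, hd, hs (Pi.single i 1 - Pi.single j 1), hl]
  simp only [smul_eq_mul]
  ring

lemma ms_upper {n : ℕ} (G : SimpleGraph (Fin n)) [DecidableRel G.Adj]
    (hω : 0 < G.cliqueNum) (k : ℕ) :
    ∀ x ∈ stdSimplex ℝ (Fin n), (Finset.univ.filter fun i => x i ≠ 0).card = k →
      x ⬝ᵥ (G.adjMatrix ℝ).mulVec x ≤ 1 - 1 / (G.cliqueNum : ℝ) := by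
  induction k using Nat.strong_induction_on with
  | _ k ih =>
  intro x hx hk
  by_cases h : ∀ i j, x i ≠ 0 → x j ≠ 0 → i ≠ j → G.Adj i j
  · rw [ms_clique_val G x hx.2 h]
    have hc : G.IsClique ((Finset.univ.filter fun i => x i ≠ 0 : Finset (Fin n)) : Set (Fin n)) := by
      intro i hi j hj hij
      simp at hi hj
      exact h i j hi hj hij
    have hle := SimpleGraph.IsClique.card_le_cliqueNum (tc := hc)
    have hcs := sq_sum_le_card_mul_sum_sq (s := Finset.univ.filter fun i => x i ≠ 0) (f := x)
    have e1 : ∑ i ∈ Finset.univ.filter (fun i => x i ≠ 0), x i = 1 := by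
      rw [Finset.sum_filter_ne_zero]; exact hx.2
    have e2 : ∑ i ∈ Finset.univ.filter (fun i => x i ≠ 0), x i ^ 2 ≤ ∑ i, x i ^ 2 :=
      Finset.sum_le_sum_of_subset_of_nonneg (Finset.filter_subset _ _)
        (fun _ _ _ => sq_nonneg _)
    rw [e1] at hcs
    have hle' : ((Finset.univ.filter fun i => x i ≠ 0).card : ℝ) ≤ G.cliqueNum := by
      exact_mod_cast hle
    have hω' : (0 : ℝ) < G.cliqueNum := by exact_mod_cast hω
    have h0 : 0 ≤ ∑ i, x i ^ 2 := Finset.sum_nonneg fun _ _ => sq_nonneg _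
    have : 1 / (G.cliqueNum : ℝ) ≤ ∑ i, x i ^ 2 := by
      rw [div_le_iff₀ hω']
      calc (1 : ℝ) = 1 ^ 2 := by norm_num
        _ ≤ _ := hcs
        _ ≤ (G.cliqueNum : ℝ) * ∑ i, x i ^ 2 := by gcongr
        _ = _ := mul_comm _ _
    linarith
  · push Not at h
    have key : ∀ i j, x i ≠ 0 → x j ≠ 0 → i ≠ j → ¬ G.Adj i j →
        (G.adjMatrix ℝ).mulVec x j ≤ (G.adjMatrix ℝ).mulVec x i →
        x ⬝ᵥ (G.adjMatrix ℝ).mulVec x ≤ 1 - 1 / (G.cliqueNum : ℝ) := by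
      intro i j hi hj hij ha hle
      have hsh := ms_shift G x i j ha (x j)
      set y := x + x j • (Pi.single i 1 - Pi.single j 1 : Fin n → ℝ) with hy
      have hyj : y j = 0 := by simp [hy, hij.symm]
      have hyi : y i = x i + x j := by simp [hy, hij]
      have hyo : ∀ l, l ≠ i → l ≠ j → y l = x l := by
        intro l h1 h2; simp [hy, h1, h2]
      have hyS : y ∈ stdSimplex ℝ (Fin n) := by
        refine ⟨fun l => ?_, ?_⟩
        · by_cases h1 : l = i
          · rw [h1, hyi]; exact add_nonneg (hx.1 i) (hx.1 j)
          by_cases h2 : l = j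
          · rw [h2, hyj]
          rw [hyo l h1 h2]; exact hx.1 l
        · simp [hy, Finset.sum_add_distrib, ← Finset.mul_sum, hx.2]
      have hcard : (Finset.univ.filter fun l => y l ≠ 0).card < k := by
        rw [← hk]
        apply Finset.card_lt_card
        refine Finset.ssubset_iff_subset_ne.2 ⟨?_, ?_⟩
        · intro l hl
          simp only [Finset.mem_filter, Finset.mem_univ, true_and] at hl ⊢
          by_cases h1 : l = i
          · rw [h1]; exact hi
          by_cases h2 : l = j
          · rw [h2]; exact hj
          rwa [hyo l h1 h2] at hl
        · intro he
          have : j ∈ Finset.univ.filter fun l => y l ≠ 0 := by rw [he]; simp [hj]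
          simp [hyj] at this
      have := ih _ hcard y hyS rfl
      have h2 := mul_nonneg (mul_nonneg zero_le_two (hx.1 j)) (sub_nonneg.2 hle)
      linarith
    obtain ⟨i, j, hi, hj, hij, ha⟩ := h
    rcases le_total ((G.adjMatrix ℝ).mulVec x j) ((G.adjMatrix ℝ).mulVec x i) with hl | hl
    · exact key i j hi hj hij ha hl
    · exact key j i hj hi hij.symm (fun h => ha h.symm) hl

/-- **Motzkin–Straus.** For a graph `G` on `n ≥ 1` vertices with adjacency matrix `A` and
clique number `ω(G)`, the maximum of `xᵀ A x` over the standard simplex is `1 - 1/ω(G)`. -/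
theorem motzkin_straus {n : ℕ} (hn : 0 < n) (G : SimpleGraph (Fin n)) [DecidableRel G.Adj] :
    IsGreatest ((fun x : Fin n → ℝ => x ⬝ᵥ (G.adjMatrix ℝ).mulVec x) '' stdSimplex ℝ (Fin n))
      (1 - 1 / (G.cliqueNum : ℝ)) := by
  have hω : 0 < G.cliqueNum := by
    have hc : G.IsClique (({⟨0, hn⟩} : Finset (Fin n)) : Set (Fin n)) := by simp
    have := SimpleGraph.IsClique.card_le_cliqueNum (tc := hc)
    rw [Finset.card_singleton] at this; exact this
  have hω' : (G.cliqueNum : ℝ) ≠ 0 := by exact_mod_cast hω.ne'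
  refine ⟨?_, ?_⟩
  · obtain ⟨s, hs⟩ := G.exists_isNClique_cliqueNum
    have hsum : ∑ i, (if i ∈ s then 1 / (G.cliqueNum : ℝ) else 0) = 1 := by
      simp [hs.card_eq, hω']
    refine ⟨fun i => if i ∈ s then 1 / (G.cliqueNum : ℝ) else 0, ⟨fun i => ?_, hsum⟩, ?_⟩
    · dsimp only; split_ifs <;> positivity
    · dsimp only
      rw [ms_clique_val G _ hsum]
      · simp [ite_pow, hs.card_eq]
        field_simp
      · intro i j hi hj hij
        refine hs.isClique ?_ ?_ hij
        · by_contra hh; exact hi (if_neg hh)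
        · by_contra hh; exact hj (if_neg hh)
  · rintro _ ⟨x, hx, rfl⟩
    exact ms_upper G hω _ x hx rfl
end

section
/- Let G be a graph on n vertices with adjacency matrix A and stability number α(G). Then the minimum value of x^T (A + I) x over the standard simplex Δ_n = {x ∈ ℝ^n : x ≥ 0, Σ_i x_i = 1} equals 1/α(G), where I is the n×n identity matrix. -/
open Matrix
open scoped RealInnerProductSpace

/-- Every stable set has size at most the stability number. -/
lemma card_le_stab {n : ℕ} (G : SimpleGraph (Fin n)) (s : Finset (Fin n))
    (hs : ∀ i ∈ s, ∀ j ∈ s, i ≠ j → ¬ G.Adj i j) : s.card ≤ stabilityNumber G := by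
  refine le_csSup ⟨n, ?_⟩ ⟨s, rfl, hs⟩
  rintro k ⟨t, rfl, -⟩
  simpa using t.card_le_univ

/-- The stability number is attained. -/
lemma exists_stab {n : ℕ} (G : SimpleGraph (Fin n)) :
    ∃ s : Finset (Fin n), s.card = stabilityNumber G ∧
      ∀ i ∈ s, ∀ j ∈ s, i ≠ j → ¬ G.Adj i j := by
  have h := Nat.sSup_mem
    (s := {k | ∃ s : Finset (Fin n), s.card = k ∧ ∀ i ∈ s, ∀ j ∈ s, i ≠ j → ¬ G.Adj i j})
    ⟨0, ∅, by simp⟩ ⟨n, by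
      rintro k ⟨t, rfl, -⟩
      simpa using t.card_le_univ⟩
  exact h

/-- If the support of `x` is stable, the quadratic form is the sum of squares. -/
lemma form_of_stable {n : ℕ} (G : SimpleGraph (Fin n)) [DecidableRel G.Adj] (x : Fin n → ℝ)
    (h : ∀ i j, x i ≠ 0 → x j ≠ 0 → ¬ G.Adj i j) :
    x ⬝ᵥ (G.adjMatrix ℝ + (1 : Matrix (Fin n) (Fin n) ℝ)).mulVec x = ∑ i, x i ^ 2 := by
  rw [Matrix.add_mulVec, Matrix.one_mulVec, dotProduct_add]
  have h0 : x ⬝ᵥ (G.adjMatrix ℝ).mulVec x = 0 := by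
    simp only [dotProduct, Matrix.mulVec, Finset.mul_sum]
    refine Finset.sum_eq_zero fun i _ => Finset.sum_eq_zero fun j _ => ?_
    by_cases hi : x i = 0
    · simp [hi]
    by_cases hj : x j = 0
    · simp [hj]
    simp [SimpleGraph.adjMatrix_apply, h i j hi hj]
  rw [h0, zero_add]
  simp [dotProduct, sq]

/-- Shifting mass between two adjacent vertices changes the form linearly. -/
lemma form_shift {n : ℕ} (G : SimpleGraph (Fin n)) [DecidableRel G.Adj] (x : Fin n → ℝ)
    (i j : Fin n) (hij : G.Adj i j) (t : ℝ) (M : Matrix (Fin n) (Fin n) ℝ)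
    (hM : M = G.adjMatrix ℝ + 1) :
    (x + t • (Pi.single i 1 - Pi.single j 1)) ⬝ᵥ
        M.mulVec (x + t • (Pi.single i 1 - Pi.single j 1)) =
      x ⬝ᵥ M.mulVec x + 2 * t * (M.mulVec x i - M.mulVec x j) := by
  have hsym : Mᵀ = M := by
    rw [hM, Matrix.transpose_add, SimpleGraph.transpose_adjMatrix, Matrix.transpose_one]
  have hcomm : ∀ d : Fin n → ℝ, x ⬝ᵥ M.mulVec d = d ⬝ᵥ M.mulVec x := by
    intro d
    rw [Matrix.dotProduct_mulVec, ← Matrix.mulVec_transpose, hsym, dotProduct_comm]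
  have hne := hij.ne
  have hdd : ((Pi.single i 1 - Pi.single j 1 : Fin n → ℝ)) ⬝ᵥ
      M.mulVec (Pi.single i 1 - Pi.single j 1) = 0 := by
    rw [Matrix.mulVec_sub, sub_dotProduct]
    simp [hM, SimpleGraph.adjMatrix_apply, hij, hij.symm, hne, hne.symm]
  have hdx : ((Pi.single i 1 - Pi.single j 1 : Fin n → ℝ)) ⬝ᵥ M.mulVec x =
      M.mulVec x i - M.mulVec x j := by
    rw [sub_dotProduct]; simp
  rw [Matrix.mulVec_add, Matrix.mulVec_smul, add_dotProduct, dotProduct_add, dotProduct_add,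
    dotProduct_smul, dotProduct_smul, smul_dotProduct, smul_dotProduct, hdd,
    hcomm (Pi.single i 1 - Pi.single j 1), hdx]
  simp only [smul_eq_mul]
  ring

/-- Lower bound, by induction on the support size. -/
lemma lower_bound {n : ℕ} (G : SimpleGraph (Fin n)) [DecidableRel G.Adj] (k : ℕ) :
    ∀ x : Fin n → ℝ, (∀ i, 0 ≤ x i) → (Finset.univ.filter (fun i => x i ≠ 0)).card = k →
      (∑ i, x i) ^ 2 ≤ stabilityNumber G *
        (x ⬝ᵥ (G.adjMatrix ℝ + (1 : Matrix (Fin n) (Fin n) ℝ)).mulVec x) := by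
  induction k using Nat.strong_induction_on with
  | _ k ih =>
  intro x hx hk
  by_cases h : ∀ i j, x i ≠ 0 → x j ≠ 0 → ¬ G.Adj i j
  · rw [form_of_stable G x h]
    have hc := card_le_stab G (Finset.univ.filter (fun i => x i ≠ 0)) (by
      intro i hi j hj _
      simp only [Finset.mem_filter, Finset.mem_univ, true_and] at hi hj
      exact h i j hi hj)
    have h1 : ∑ i, x i = ∑ i ∈ Finset.univ.filter (fun i => x i ≠ 0), x i :=
      (Finset.sum_filter_ne_zero _).symm
    have h2 := sq_sum_le_card_mul_sum_sq (s := Finset.univ.filter (fun i => x i ≠ 0)) (f := x)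
    have h3 : ∑ i ∈ Finset.univ.filter (fun i => x i ≠ 0), x i ^ 2 ≤ ∑ i, x i ^ 2 :=
      Finset.sum_le_sum_of_subset_of_nonneg (Finset.subset_univ _) fun i _ _ => sq_nonneg _
    rw [h1]
    refine h2.trans ?_
    gcongr
  · push Not at h
    obtain ⟨i, j, hi, hj, hij⟩ := h
    have key : ∀ i j, x i ≠ 0 → x j ≠ 0 → G.Adj i j →
        (G.adjMatrix ℝ + (1 : Matrix (Fin n) (Fin n) ℝ)).mulVec x i ≤
          (G.adjMatrix ℝ + (1 : Matrix (Fin n) (Fin n) ℝ)).mulVec x j →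
        (∑ i, x i) ^ 2 ≤ stabilityNumber G *
          (x ⬝ᵥ (G.adjMatrix ℝ + (1 : Matrix (Fin n) (Fin n) ℝ)).mulVec x) := by
      intro i j hi hj hij hle
      have hne := hij.ne
      have hf := form_shift G x i j hij (x j) _ rfl
      set y : Fin n → ℝ := x + x j • (Pi.single i 1 - Pi.single j 1) with hy
      have hyj : y j = 0 := by simp [hy, hne.symm]
      have hyi : y i = x i + x j := by simp [hy, hne]
      have hyo : ∀ l, l ≠ i → l ≠ j → y l = x l := by
        intro l h1 h2; simp [hy, h1, h2]
      have hy0 : ∀ l, 0 ≤ y l := by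
        intro l
        by_cases h1 : l = i
        · rw [h1, hyi]; exact add_nonneg (hx i) (hx j)
        by_cases h2 : l = j
        · rw [h2, hyj]
        rw [hyo l h1 h2]; exact hx l
      have hsum : ∑ l, y l = ∑ l, x l := by
        simp [hy, Finset.sum_add_distrib, ← Finset.mul_sum, Finset.sum_sub_distrib]
      have hlt : (Finset.univ.filter (fun l => y l ≠ 0)).card < k := by
        rw [← hk]
        apply Finset.card_lt_card
        rw [Finset.ssubset_iff_of_subset]
        · exact ⟨j, by simp [hj], by simp [hyj]⟩
        · intro l hl
          simp only [Finset.mem_filter, Finset.mem_univ, true_and] at hl ⊢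
          by_cases h1 : l = i
          · rw [h1]; exact hi
          by_cases h2 : l = j
          · rw [h2]; exact hj
          rwa [hyo l h1 h2] at hl
      have := ih _ hlt y hy0 rfl
      rw [hsum] at this
      refine this.trans ?_
      apply mul_le_mul_of_nonneg_left _ (Nat.cast_nonneg _)
      rw [hf]
      nlinarith [mul_nonneg (hx j) (sub_nonneg.2 hle)]
    rcases le_total ((G.adjMatrix ℝ + (1 : Matrix (Fin n) (Fin n) ℝ)).mulVec x i)
      ((G.adjMatrix ℝ + (1 : Matrix (Fin n) (Fin n) ℝ)).mulVec x j) with hle | hle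
    · exact key i j hi hj hij hle
    · exact key j i hj hi hij.symm hle

/-- For a graph `G` on `n ≥ 1` vertices with adjacency matrix `A` and stability number `α(G)`,
the minimum of `xᵀ (A + I) x` over the standard simplex is `1/α(G)`. -/
theorem min_simplex_eq_inv_stabilityNumber {n : ℕ} (hn : 0 < n)
    (G : SimpleGraph (Fin n)) [DecidableRel G.Adj] :
    IsLeast ((fun x : Fin n → ℝ =>
        x ⬝ᵥ (G.adjMatrix ℝ + (1 : Matrix (Fin n) (Fin n) ℝ)).mulVec x) '' stdSimplex ℝ (Fin n))
      (1 / (stabilityNumber G : ℝ)) := by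
  have hpos : 0 < stabilityNumber G := by
    have := card_le_stab G {⟨0, hn⟩} (by simp)
    rw [Finset.card_singleton] at this
    exact this
  have hposR : (0 : ℝ) < stabilityNumber G := by exact_mod_cast hpos
  constructor
  · obtain ⟨s, hs, hst⟩ := exists_stab G
    refine ⟨fun i => if i ∈ s then 1 / (stabilityNumber G : ℝ) else 0, ⟨?_, ?_⟩, ?_⟩
    · intro i
      dsimp only
      split_ifs <;> positivity
    · simp [hs, hposR.ne']
    · dsimp only
      rw [form_of_stable]
      · simp only [ite_pow]
        simp [hs]
        field_simp
      · intro i j hi hj hij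
        exact hst i (by by_contra h; simp [h] at hi) j (by by_contra h; simp [h] at hj) hij.ne hij
  · rintro _ ⟨x, ⟨hx0, hx1⟩, rfl⟩
    have := lower_bound G _ x hx0 rfl
    rw [hx1] at this
    dsimp only
    rw [div_le_iff₀ hposR]
    linarith
end

section
/- Let G be a graph on n vertices with adjacency matrix A and stability number α(G), and let k > 0 be a real scalar. The matrix M_{A,k} := kA + kI - J is copositive if and only if α(G) ≤ k. -/
open Matrix
open scoped RealInnerProductSpace

/-- Moving along `e_i - e_j` for adjacent `i, j` changes the quadratic form affinely. -/
lemma quad_shift {n : ℕ} (B : Matrix (Fin n) (Fin n) ℝ) (hB : B.IsSymm) (i j : Fin n)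
    (h : B i i + B j j = 2 * B i j) (x : Fin n → ℝ) (t : ℝ) :
    (x + t • (Pi.single i 1 - Pi.single j 1 : Fin n → ℝ)) ⬝ᵥ
      B.mulVec (x + t • (Pi.single i 1 - Pi.single j 1 : Fin n → ℝ)) =
    x ⬝ᵥ B.mulVec x + 2 * t * (B.mulVec x i - B.mulVec x j) := by
  have h1 : ∀ v : Fin n → ℝ, x ⬝ᵥ B.mulVec v = v ⬝ᵥ B.mulVec x := by
    intro v
    rw [Matrix.dotProduct_mulVec, ← Matrix.mulVec_transpose, hB.eq, dotProduct_comm]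
  have h2 : B j i = B i j := hB.apply i j
  rw [Matrix.mulVec_add, Matrix.mulVec_smul, add_dotProduct, dotProduct_add, dotProduct_add,
    dotProduct_smul, smul_dotProduct, smul_dotProduct, dotProduct_smul, h1 (Pi.single i 1 - Pi.single j 1)]
  simp only [sub_dotProduct, Matrix.mulVec_sub, single_one_dotProduct, Pi.sub_apply,
    Matrix.mulVec_single_one, Matrix.col_apply, smul_eq_mul, h2]
  linear_combination t ^ 2 * h

lemma quad_MAk {n : ℕ} (A : Matrix (Fin n) (Fin n) ℝ) (k : ℝ) (x : Fin n → ℝ) :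
    x ⬝ᵥ (MAk A k).mulVec x = k * (x ⬝ᵥ (A + 1).mulVec x) - (∑ i, x i) ^ 2 := by
  have hJ : x ⬝ᵥ (Matrix.of (fun _ _ => (1 : ℝ)) : Matrix (Fin n) (Fin n) ℝ).mulVec x
      = (∑ i, x i) ^ 2 := by
    simp [dotProduct, Matrix.mulVec, ← Finset.sum_mul, sq]
  rw [MAk, ← smul_add, Matrix.sub_mulVec, dotProduct_sub, hJ, Matrix.smul_mulVec,
    dotProduct_smul, smul_eq_mul]

lemma motzkin_straus_s2 {n : ℕ} (G : SimpleGraph (Fin n)) [DecidableRel G.Adj] (k : ℝ)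
    (hk : 0 < k)
    (hs : ∀ s : Finset (Fin n), (∀ i ∈ s, ∀ j ∈ s, i ≠ j → ¬ G.Adj i j) → (s.card : ℝ) ≤ k)
    (m : ℕ) : ∀ x : Fin n → ℝ, (∀ i, 0 ≤ x i) → (Finset.univ.filter (fun i => x i ≠ 0)).card = m →
      (∑ i, x i) ^ 2 ≤ k * (x ⬝ᵥ (G.adjMatrix ℝ + 1).mulVec x) := by
  induction m using Nat.strong_induction_on with
  | _ m ih =>
  intro x hx hm
  by_cases hst : ∀ i ∈ Finset.univ.filter (fun i => x i ≠ 0),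
      ∀ j ∈ Finset.univ.filter (fun i => x i ≠ 0), i ≠ j → ¬ G.Adj i j
  · have hc := hs _ hst
    have h1 : ∑ i, x i = ∑ i ∈ Finset.univ.filter (fun i => x i ≠ 0), x i :=
      (Finset.sum_filter_ne_zero _).symm
    have h2 := sq_sum_le_card_mul_sum_sq (s := Finset.univ.filter (fun i => x i ≠ 0)) (f := x)
    have h3 : ∑ i ∈ Finset.univ.filter (fun i => x i ≠ 0), x i ^ 2 ≤ ∑ i, x i ^ 2 :=
      Finset.sum_le_sum_of_subset_of_nonneg (Finset.filter_subset _ _)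
        (fun i _ _ => sq_nonneg _)
    have h4 : ∑ i, x i ^ 2 ≤ x ⬝ᵥ (G.adjMatrix ℝ + 1).mulVec x := by
      rw [Matrix.add_mulVec, dotProduct_add, Matrix.one_mulVec]
      have h5 : 0 ≤ x ⬝ᵥ (G.adjMatrix ℝ).mulVec x := by
        refine Finset.sum_nonneg fun i _ => mul_nonneg (hx i) ?_
        rw [SimpleGraph.adjMatrix_mulVec_apply]
        exact Finset.sum_nonneg fun j _ => hx j
      have h6 : x ⬝ᵥ x = ∑ i, x i ^ 2 := by simp [dotProduct, sq]
      linarith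
    rw [h1]
    have h0 : 0 ≤ ∑ i ∈ Finset.univ.filter (fun i => x i ≠ 0), x i ^ 2 :=
      Finset.sum_nonneg fun i _ => sq_nonneg _
    calc _ ≤ _ := h2
      _ ≤ k * ∑ i ∈ Finset.univ.filter (fun i => x i ≠ 0), x i ^ 2 := by gcongr
      _ ≤ _ := by gcongr; exact h3.trans h4
  · push Not at hst
    obtain ⟨i₀, hi₀, j₀, hj₀, -, hadj₀⟩ := hst
    obtain ⟨i, j, hi, hj, hadj, hle⟩ : ∃ i j, x i ≠ 0 ∧ x j ≠ 0 ∧ G.Adj i j ∧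
        (G.adjMatrix ℝ + 1).mulVec x i ≤ (G.adjMatrix ℝ + 1).mulVec x j := by
      simp only [Finset.mem_filter, Finset.mem_univ, true_and] at hi₀ hj₀
      rcases le_total ((G.adjMatrix ℝ + 1).mulVec x i₀) ((G.adjMatrix ℝ + 1).mulVec x j₀) with h | h
      · exact ⟨i₀, j₀, hi₀, hj₀, hadj₀, h⟩
      · exact ⟨j₀, i₀, hj₀, hi₀, hadj₀.symm, h⟩
    have hne : i ≠ j := hadj.ne
    have hsymm : (G.adjMatrix ℝ + 1).IsSymm := (G.isSymm_adjMatrix).add Matrix.isSymm_one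
    have hq := quad_shift (G.adjMatrix ℝ + 1) hsymm i j
      (by simp [hadj, hne]; norm_num) x (x j)
    set y := x + x j • (Pi.single i 1 - Pi.single j 1 : Fin n → ℝ) with hy
    have hyj : y j = 0 := by simp [hy, hne.symm]
    have hyi : y i = x i + x j := by simp [hy, hne]
    have hyo : ∀ l, l ≠ i → l ≠ j → y l = x l := by
      intro l h1 h2
      simp [hy, h1, h2]
    have hsum : ∑ l, y l = ∑ l, x l := by
      simp [hy, Finset.sum_add_distrib, ← Finset.mul_sum]
    have hy0 : ∀ l, 0 ≤ y l := by
      intro l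
      by_cases h1 : l = i
      · subst h1; rw [hyi]; exact add_nonneg (hx _) (hx _)
      by_cases h2 : l = j
      · subst h2; rw [hyj]
      rw [hyo l h1 h2]; exact hx l
    have hlt : (Finset.univ.filter (fun i => y i ≠ 0)).card < m := by
      rw [← hm]
      apply Finset.card_lt_card
      rw [Finset.ssubset_iff_of_subset]
      · exact ⟨j, by simpa using hj, by simpa using hyj⟩
      · intro l hl
        simp only [Finset.mem_filter, Finset.mem_univ, true_and] at hl ⊢
        by_cases h1 : l = i
        · subst h1; exact hi
        by_cases h2 : l = j
        · subst h2; exact hj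
        rwa [hyo l h1 h2] at hl
    have := ih _ hlt y hy0 rfl
    rw [hsum] at this
    refine this.trans (mul_le_mul_of_nonneg_left ?_ hk.le)
    rw [hq]
    nlinarith [mul_nonneg (hx j) (sub_nonneg.2 hle)]

/-- For `k > 0`, the matrix `M_{A,k} = kA + kI - J` is copositive iff `α(G) ≤ k`. -/
theorem MAk_copositive_iff {n : ℕ} (G : SimpleGraph (Fin n)) [DecidableRel G.Adj]
    (k : ℝ) (hk : 0 < k) :
    Copositive (MAk (G.adjMatrix ℝ) k) ↔ (stabilityNumber G : ℝ) ≤ k := by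
  have hbdd : BddAbove {k | ∃ s : Finset (Fin n), s.card = k ∧
      ∀ i ∈ s, ∀ j ∈ s, i ≠ j → ¬ G.Adj i j} := by
    refine ⟨n, ?_⟩
    rintro _ ⟨s, rfl, -⟩
    simpa using s.card_le_univ
  constructor
  · intro h
    obtain ⟨s, hcard, hs⟩ : stabilityNumber G ∈ {k | ∃ s : Finset (Fin n), s.card = k ∧
        ∀ i ∈ s, ∀ j ∈ s, i ≠ j → ¬ G.Adj i j} :=
      Nat.sSup_mem ⟨0, ∅, by simp⟩ hbdd
    rw [← hcard]
    have h1 := h (fun i => if i ∈ s then 1 else 0) (fun i => by positivity)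
    rw [quad_MAk] at h1
    have h2 : (∑ i, if i ∈ s then (1 : ℝ) else 0) = s.card := by simp
    have h3 : (fun i => if i ∈ s then (1 : ℝ) else 0) ⬝ᵥ
        (G.adjMatrix ℝ + 1).mulVec (fun i => if i ∈ s then (1 : ℝ) else 0) = s.card := by
      rw [← h2]
      refine Finset.sum_congr rfl fun i _ => ?_
      by_cases hi : i ∈ s
      · rw [Matrix.add_mulVec, Matrix.one_mulVec, Pi.add_apply, SimpleGraph.adjMatrix_mulVec_apply,
          Finset.sum_eq_zero]
        · simp [hi]
        · intro j hj
          rw [SimpleGraph.mem_neighborFinset] at hj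
          rw [if_neg]
          intro hjs
          exact hs i hi j hjs hj.ne hj
      · simp [hi]
    rw [h2, h3] at h1
    rcases (Nat.cast_nonneg (α := ℝ) s.card).eq_or_lt with h0 | h0
    · rw [← h0]; exact hk.le
    · by_contra hlt
      push Not at hlt
      nlinarith
  · intro h x hx
    rw [quad_MAk, sub_nonneg]
    refine motzkin_straus_s2 G k hk (fun s hs => le_trans ?_ h) _ x hx rfl
    exact_mod_cast le_csSup hbdd ⟨s, rfl, hs⟩
end

section
/- Let G be a graph on n vertices with adjacency matrix A and stability number α(G), and let k > 0 be a noninteger real scalar. Then the quartic form p_{A,k}(x) := (x²)^T (kA + kI - J) (x²) has a local minimizer over ℝ^n if and only if α(G) < k. -/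
open Matrix
open scoped RealInnerProductSpace

namespace PAk

lemma sym_swap {n : ℕ} {M : Matrix (Fin n) (Fin n) ℝ} (hM : Mᵀ = M) (u v : Fin n → ℝ) :
    u ⬝ᵥ M.mulVec v = v ⬝ᵥ M.mulVec u := by
  rw [Matrix.dotProduct_mulVec, ← Matrix.mulVec_transpose, hM, dotProduct_comm]

lemma expand {n : ℕ} {M : Matrix (Fin n) (Fin n) ℝ} (hM : Mᵀ = M) (y z : Fin n → ℝ) (t : ℝ) :
    (y + t • z) ⬝ᵥ M.mulVec (y + t • z) =
      y ⬝ᵥ M.mulVec y + 2 * t * (z ⬝ᵥ M.mulVec y) + t ^ 2 * (z ⬝ᵥ M.mulVec z) := by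
  simp only [Matrix.mulVec_add, Matrix.mulVec_smul, add_dotProduct, dotProduct_add,
    smul_dotProduct, dotProduct_smul, smul_eq_mul]
  rw [sym_swap hM y z]; ring

/-- `A + I`. -/
noncomputable def B {n : ℕ} (G : SimpleGraph (Fin n)) [DecidableRel G.Adj] :
    Matrix (Fin n) (Fin n) ℝ := G.adjMatrix ℝ + 1

lemma B_symm {n : ℕ} (G : SimpleGraph (Fin n)) [DecidableRel G.Adj] : (B G)ᵀ = B G := by
  simp [B]

lemma B_apply {n : ℕ} (G : SimpleGraph (Fin n)) [DecidableRel G.Adj] (i j : Fin n) :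
    B G i j = if (i = j ∨ G.Adj i j) then 1 else 0 := by
  by_cases h : i = j
  · subst h; simp [B]
  · simp [B, Matrix.one_apply, h]

lemma MAk_mulVec {n : ℕ} (G : SimpleGraph (Fin n)) [DecidableRel G.Adj] (k : ℝ)
    (y : Fin n → ℝ) (i : Fin n) :
    (MAk (G.adjMatrix ℝ) k).mulVec y i = k * (B G).mulVec y i - ∑ j, y j := by
  have : MAk (G.adjMatrix ℝ) k = k • B G - Matrix.of (fun _ _ => (1 : ℝ)) := by
    simp [MAk, B]
  rw [this, Matrix.sub_mulVec, Matrix.smul_mulVec]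
  simp [Matrix.mulVec, dotProduct]

lemma MAk_form {n : ℕ} (G : SimpleGraph (Fin n)) [DecidableRel G.Adj] (k : ℝ)
    (y : Fin n → ℝ) :
    y ⬝ᵥ (MAk (G.adjMatrix ℝ) k).mulVec y = k * (y ⬝ᵥ (B G).mulVec y) - (∑ j, y j) ^ 2 := by
  simp only [dotProduct, MAk_mulVec, mul_sub, Finset.sum_sub_distrib]
  rw [← Finset.sum_mul]
  congr 1
  · rw [Finset.mul_sum]; exact Finset.sum_congr rfl fun i _ => by ring
  · ring

lemma MAk_symm {n : ℕ} (G : SimpleGraph (Fin n)) [DecidableRel G.Adj] (k : ℝ) :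
    (MAk (G.adjMatrix ℝ) k)ᵀ = MAk (G.adjMatrix ℝ) k := by
  ext i j
  simp [MAk, Matrix.one_apply, G.adj_comm, eq_comm]

lemma card_le {n : ℕ} (G : SimpleGraph (Fin n)) (s : Finset (Fin n))
    (hs : ∀ i ∈ s, ∀ j ∈ s, i ≠ j → ¬ G.Adj i j) : s.card ≤ stabilityNumber G := by
  refine le_csSup ⟨n, ?_⟩ ⟨s, rfl, hs⟩
  rintro _ ⟨t, rfl, -⟩
  simpa using Finset.card_le_univ t

lemma exists_max {n : ℕ} (G : SimpleGraph (Fin n)) : ∃ s : Finset (Fin n),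
    s.card = stabilityNumber G ∧ ∀ i ∈ s, ∀ j ∈ s, i ≠ j → ¬ G.Adj i j := by
  refine Nat.sSup_mem (s := {k | ∃ s : Finset (Fin n), s.card = k ∧
    ∀ i ∈ s, ∀ j ∈ s, i ≠ j → ¬ G.Adj i j}) ⟨0, ∅, by simp⟩ ⟨n, ?_⟩
  rintro _ ⟨t, rfl, -⟩
  simpa using Finset.card_le_univ t

lemma form_stable {n : ℕ} (G : SimpleGraph (Fin n)) [DecidableRel G.Adj] (y : Fin n → ℝ)
    (h : ∀ i j, y i ≠ 0 → y j ≠ 0 → ¬ G.Adj i j) :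
    y ⬝ᵥ (B G).mulVec y = ∑ i, y i ^ 2 := by
  simp only [dotProduct, Matrix.mulVec]
  refine Finset.sum_congr rfl fun i _ => ?_
  by_cases hi : y i = 0
  · simp [hi]
  rw [Finset.sum_eq_single i]
  · simp [B_apply]; ring
  · intro j _ hj
    by_cases hj0 : y j = 0
    · simp [hj0]
    · simp [B_apply, h i j hi hj0, hj.symm]
  · simp

/-- Motzkin–Straus inequality. -/
lemma motzkin {n : ℕ} (G : SimpleGraph (Fin n)) [DecidableRel G.Adj] (m : ℕ) :
    ∀ y : Fin n → ℝ, (Finset.univ.filter fun i => y i ≠ 0).card = m → (∀ i, 0 ≤ y i) →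
      (∑ i, y i) ^ 2 ≤ stabilityNumber G * (y ⬝ᵥ (B G).mulVec y) := by
  induction m using Nat.strong_induction_on with
  | _ m ih =>
  intro y hm hy
  by_cases h : ∀ i j, y i ≠ 0 → y j ≠ 0 → ¬ G.Adj i j
  · rw [form_stable G y h]
    set T := Finset.univ.filter fun i => y i ≠ 0 with hT
    have h1 : ∑ i, y i = ∑ i ∈ T, y i := by
      rw [hT, Finset.sum_filter_ne_zero]
    have h2 : T.card ≤ stabilityNumber G :=
      card_le G T fun i hi j hj _ => h i j (by simpa [hT] using hi) (by simpa [hT] using hj)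
    calc (∑ i, y i) ^ 2 = (∑ i ∈ T, y i) ^ 2 := by rw [h1]
      _ ≤ T.card * ∑ i ∈ T, y i ^ 2 := sq_sum_le_card_mul_sum_sq
      _ ≤ stabilityNumber G * ∑ i, y i ^ 2 := by
        have h3 : ∑ i ∈ T, y i ^ 2 ≤ ∑ i, y i ^ 2 :=
          Finset.sum_le_univ_sum_of_nonneg fun i => sq_nonneg _
        have h4 : (0:ℝ) ≤ ∑ i ∈ T, y i ^ 2 := Finset.sum_nonneg fun i _ => sq_nonneg _
        have h5 : (T.card : ℝ) ≤ stabilityNumber G := by exact_mod_cast h2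
        gcongr
  · push Not at h
    obtain ⟨i, j, hi, hj, hij⟩ := h
    -- a one-sided version
    have key : ∀ i j, y i ≠ 0 → y j ≠ 0 → G.Adj i j →
        (Pi.single i 1 - Pi.single j 1 : Fin n → ℝ) ⬝ᵥ (B G).mulVec y ≤ 0 →
        (∑ i, y i) ^ 2 ≤ stabilityNumber G * (y ⬝ᵥ (B G).mulVec y) := by
      intro i j hi hj hij hd
      have hne : i ≠ j := hij.ne
      set d : Fin n → ℝ := Pi.single i 1 - Pi.single j 1 with hdd
      have hz : d ⬝ᵥ (B G).mulVec d = 0 := by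
        simp [hdd, Matrix.mulVec_sub, B_apply, hij, hij.symm]
      have hv : ∀ l, (y + y j • d) l = if l = j then 0 else if l = i then y i + y j else y l := by
        intro l
        by_cases h1 : l = j
        · subst h1; simp [hdd, hne.symm]
        · by_cases h2 : l = i
          · subst h2; simp [hdd, h1]
          · simp [hdd, h1, h2]
      have hs : ∑ l, (y + y j • d) l = ∑ l, y l := by
        simp [hdd, Finset.sum_add_distrib, ← Finset.mul_sum]
      have hnn : ∀ l, 0 ≤ (y + y j • d) l := by
        intro l; rw [hv]; split_ifs
        · exact le_rfl
        · exact add_nonneg (hy _) (hy _)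
        · exact hy _
      have hlt : (Finset.univ.filter fun l => (y + y j • d) l ≠ 0).card < m := by
        rw [← hm]
        apply Finset.card_lt_card
        rw [Finset.ssubset_iff_of_subset]
        · exact ⟨j, by simp [hj], by simp [hv j, -Pi.add_apply]⟩
        · intro l hl
          simp only [Finset.mem_filter, Finset.mem_univ, true_and, hv] at hl ⊢
          split_ifs at hl with h1 h2
          · exact absurd rfl hl
          · rw [h2]; exact hi
          · exact hl
      have := ih _ hlt _ rfl hnn
      rw [hs, expand (B_symm G), hz] at this
      refine this.trans ?_
      gcongr
      have := mul_nonneg (hy j) (neg_nonneg.2 hd)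
      nlinarith
    rcases le_total ((Pi.single i 1 - Pi.single j 1 : Fin n → ℝ) ⬝ᵥ (B G).mulVec y) 0 with hd | hd
    · exact key i j hi hj hij hd
    · refine key j i hj hi hij.symm ?_
      rw [← neg_sub, neg_dotProduct]; linarith

/-- One-dimensional second order conditions. -/
lemma second_order (a b : ℝ) (h : ∀ᶠ t in nhds (0:ℝ), 0 ≤ 2 * t * a + t ^ 2 * b) :
    a = 0 ∧ 0 ≤ b := by
  obtain ⟨δ, hδ, h⟩ := Metric.eventually_nhds_iff.1 h
  have h' : ∀ t, |t| < δ → 0 ≤ 2 * t * a + t ^ 2 * b := fun t ht => h (by simpa using ht)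
  have ha : a = 0 := by
    by_contra hne
    set c := |a| + |b| * δ + δ with hc
    have ha0 : 0 < |a| := abs_pos.2 hne
    have hb0 := abs_nonneg b
    -- t = -s a with s small
    obtain ⟨s, hs0, hs1, hs2⟩ : ∃ s : ℝ, 0 < s ∧ s * |a| < δ ∧ s * |b| < 2 := by
      refine ⟨min (δ / (2 * |a|)) (1 / (|b| + 1)), by positivity, ?_, ?_⟩
      · calc _ ≤ δ / (2 * |a|) * |a| := by gcongr; exact min_le_left _ _
          _ = δ / 2 := by field_simp
          _ < δ := by linarith
      · calc _ ≤ 1 / (|b| + 1) * |b| := by gcongr; exact min_le_right _ _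
          _ ≤ 1 := by rw [one_div, inv_mul_le_iff₀ (by positivity)]; linarith
          _ < 2 := by norm_num
    have h1 := h' (-(s * a)) (by rw [abs_neg, abs_mul, abs_of_pos hs0]; exact hs1)
    have h2 : s * b < 2 := lt_of_le_of_lt (by gcongr; exact le_abs_self b) hs2
    have h3 : 0 < s * a ^ 2 := by positivity
    nlinarith [mul_pos h3 (sub_pos.2 h2)]
  refine ⟨ha, ?_⟩
  have h1 := h' (δ / 2) (by rw [abs_of_pos (by positivity)]; linarith)
  rw [ha] at h1
  have : 0 < (δ / 2) ^ 2 := by positivity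
  by_contra hb
  nlinarith [mul_pos this (neg_pos.2 (not_le.1 hb))]

lemma conditions {n : ℕ} {M : Matrix (Fin n) (Fin n) ℝ} (hM : Mᵀ = M)
    (x : EuclideanSpace ℝ (Fin n)) (hx : IsLocalMinimizer (quarticForm M) Set.univ x)
    (z : Fin n → ℝ) (hz : ∀ i, x i = 0 → z i = 0) :
    z ⬝ᵥ M.mulVec (vsq x) = 0 ∧ 0 ≤ z ⬝ᵥ M.mulVec z := by
  obtain ⟨-, ε, hε, h⟩ := hx
  apply second_order
  let c : ℝ → EuclideanSpace ℝ (Fin n) :=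
    fun t => WithLp.toLp 2 fun i => x i * √(1 + t * (z i / x i ^ 2))
  have hc : Continuous c := by
    refine (PiLp.continuous_toLp 2 _).comp ?_
    fun_prop
  have hc0 : c 0 = x := by ext i; simp [c]
  have e1 : ∀ᶠ t in nhds (0:ℝ), ‖c t - x‖ ≤ ε := by
    have : Filter.Tendsto (fun t => ‖c t - x‖) (nhds 0) (nhds ‖c 0 - x‖) :=
      (hc.sub continuous_const).norm.tendsto 0
    rw [hc0, sub_self, norm_zero] at this
    exact (this.eventually_lt_const hε).mono fun t ht => ht.le
  have e2 : ∀ᶠ t in nhds (0:ℝ), ∀ i, 0 ≤ 1 + t * (z i / x i ^ 2) := by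
    rw [Filter.eventually_all]
    intro i
    have : Filter.Tendsto (fun t : ℝ => 1 + t * (z i / x i ^ 2)) (nhds 0)
        (nhds (1 + 0 * (z i / x i ^ 2))) :=
      Continuous.tendsto (by fun_prop) 0
    rw [zero_mul, add_zero] at this
    exact (this.eventually_const_lt one_pos).mono fun t ht => ht.le
  filter_upwards [e1, e2] with t h1 h2
  have h3 := h (c t) trivial h1
  have h4 : vsq (c t) = vsq x + t • z := by
    ext i
    by_cases hi : x i = 0
    · simp [vsq, c, hi, hz i hi]
    · simp only [vsq, c, mul_pow, Real.sq_sqrt (h2 i), Pi.add_apply, Pi.smul_apply, smul_eq_mul]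
      field_simp
  simp only [quarticForm] at h3
  rw [h4, expand hM] at h3
  linarith

lemma minimizer_zero {n : ℕ} (G : SimpleGraph (Fin n)) [DecidableRel G.Adj]
    (k : ℝ) (hk : 0 < k) (hk' : ∀ m : ℤ, (m : ℝ) ≠ k) (x : EuclideanSpace ℝ (Fin n))
    (hx : IsLocalMinimizer (quarticForm (MAk (G.adjMatrix ℝ) k)) Set.univ x) : x = 0 := by
  classical
  by_contra hx0
  have hc := conditions (MAk_symm G k) x hx
  set y := vsq x with hy
  have hy0 : ∀ i, 0 ≤ y i := fun i => sq_nonneg _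
  have hs : 0 < ∑ i, y i := by
    obtain ⟨i, hi⟩ : ∃ i, x i ≠ 0 := by
      by_contra! hcon
      exact hx0 (by ext i; simpa using hcon i)
    exact Finset.sum_pos' (fun i _ => hy0 i) ⟨i, Finset.mem_univ _, by simp only [hy, vsq]; positivity⟩
  have first : ∀ i, x i ≠ 0 → k * (B G).mulVec y i = ∑ j, y j := by
    intro i hi
    have := (hc (Pi.single i 1) (fun j hj => by
      have : j ≠ i := by rintro rfl; exact hi hj
      simp [this])).1
    rw [single_one_dotProduct, MAk_mulVec] at this
    linarith
  have trans : ∀ i j l, x i ≠ 0 → x j ≠ 0 → x l ≠ 0 → G.Adj i j → G.Adj j l → i ≠ l →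
      G.Adj i l := by
    intro i j l hi hj hl hij hjl hil
    by_contra hnot
    have hnot' : ¬ G.Adj l i := fun h => hnot h.symm
    have := (hc (Pi.single i 1 - Pi.single j 1 + Pi.single l 1) (fun m hm => by
      have h1 : m ≠ i := by rintro rfl; exact hi hm
      have h2 : m ≠ j := by rintro rfl; exact hj hm
      have h3 : m ≠ l := by rintro rfl; exact hl hm
      simp [h1, h2, h3])).2
    rw [MAk_form] at this
    simp [Finset.sum_add_distrib, Matrix.mulVec_add, Matrix.mulVec_sub, B_apply, hij, hij.symm,
      hjl, hjl.symm, hnot, hnot', hil, hil.symm] at this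
    linarith
  -- maximal stable subset of the support
  obtain ⟨S, hS, hmax⟩ := Finset.exists_max_image
    (Finset.univ.filter fun S : Finset (Fin n) => (∀ i ∈ S, x i ≠ 0) ∧
      ∀ i ∈ S, ∀ j ∈ S, i ≠ j → ¬ G.Adj i j) Finset.card ⟨∅, by simp⟩
  simp only [Finset.mem_filter, Finset.mem_univ, true_and] at hS hmax
  have count : ∀ j, x j ≠ 0 → ∑ i ∈ S, B G i j = 1 := by
    intro j hj
    obtain ⟨i, hiS, hi⟩ : ∃ i ∈ S, i = j ∨ G.Adj i j := by
      by_contra! hcon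
      have hjS : j ∉ S := fun hjS => (hcon j hjS).1 rfl
      have := hmax (insert j S) ⟨?_, ?_⟩
      · rw [Finset.card_insert_of_notMem hjS] at this; omega
      · intro i hi
        rcases Finset.mem_insert.1 hi with rfl | hi
        · exact hj
        · exact hS.1 i hi
      · intro a ha b hb hab
        rcases Finset.mem_insert.1 ha with ha1 | ha1 <;> rcases Finset.mem_insert.1 hb with hb1 | hb1
        · exact absurd (ha1.trans hb1.symm) hab
        · rw [ha1]; exact fun h => (hcon b hb1).2 h.symm
        · rw [hb1]; exact (hcon a ha1).2
        · exact hS.2 a ha1 b hb1 hab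
    rw [Finset.sum_eq_single_of_mem i hiS, B_apply, if_pos hi]
    intro b hb hbi
    rw [B_apply, if_neg]
    intro hbj
    refine hS.2 b hb i hiS hbi ?_
    rcases hbj with rfl | hbj
    · rcases hi with rfl | hi
      · exact absurd rfl hbi
      · exact hi.symm
    · rcases hi with rfl | hi
      · exact hbj
      · exact trans b j i (hS.1 b hb) hj (hS.1 i hiS) hbj hi.symm hbi
  have h1 : ∑ i ∈ S, k * (B G).mulVec y i = S.card * ∑ j, y j := by
    rw [Finset.sum_congr rfl fun i hi => first i (hS.1 i hi)]
    simp
  have h2 : ∑ i ∈ S, (B G).mulVec y i = ∑ j, y j := by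
    simp only [Matrix.mulVec, dotProduct]
    rw [Finset.sum_comm]
    refine Finset.sum_congr rfl fun j _ => ?_
    rw [← Finset.sum_mul]
    by_cases hj : x j = 0
    · simp [hy, vsq, hj]
    · rw [count j hj, one_mul]
  rw [← Finset.mul_sum, h2] at h1
  exact hk' S.card (by exact_mod_cast (mul_right_cancel₀ hs.ne' h1).symm)

end PAk

/-- For `k > 0` noninteger, the quartic form `p_{A,k}` has a local minimizer over `ℝⁿ`
iff `α(G) < k`. -/
theorem pAk_has_localMinimizer_iff {n : ℕ} (G : SimpleGraph (Fin n)) [DecidableRel G.Adj]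
    (k : ℝ) (hk : 0 < k) (hk' : ∀ m : ℤ, (m : ℝ) ≠ k) :
    (∃ xm, IsLocalMinimizer (quarticForm (MAk (G.adjMatrix ℝ) k)) Set.univ xm) ↔
      (stabilityNumber G : ℝ) < k := by
  classical
  constructor
  · rintro ⟨x, hx⟩
    obtain rfl := PAk.minimizer_zero G k hk hk' x hx
    by_contra hlt
    have hlt : k < stabilityNumber G :=
      lt_of_le_of_ne (not_lt.1 hlt) fun h => hk' (stabilityNumber G) (by exact_mod_cast h.symm)
    obtain ⟨s, hs, hst⟩ := PAk.exists_max G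
    obtain ⟨-, ε, hε, h⟩ := hx
    let w : EuclideanSpace ℝ (Fin n) := WithLp.toLp 2 fun i => if i ∈ s then (1:ℝ) else 0
    obtain ⟨t, ht, htw⟩ : ∃ t : ℝ, 0 < t ∧ t * ‖w‖ ≤ ε := by
      refine ⟨ε / (‖w‖ + 1), by positivity, ?_⟩
      rw [div_mul_eq_mul_div, div_le_iff₀ (by positivity)]
      nlinarith [norm_nonneg w]
    have h1 := h (t • w) trivial (by
      rw [sub_zero, norm_smul, Real.norm_eq_abs, abs_of_pos ht]; exact htw)
    have hv : vsq (t • w) = fun i => if i ∈ s then t ^ 2 else 0 := by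
      ext i; by_cases hi : i ∈ s <;> simp [vsq, w, hi]
    have hv0 : vsq (0 : EuclideanSpace ℝ (Fin n)) = 0 := by ext i; simp [vsq]
    simp only [quarticForm] at h1
    rw [hv, hv0, zero_dotProduct, PAk.MAk_form, PAk.form_stable] at h1
    · simp [← Finset.sum_filter, hs] at h1
      have hp : (0:ℝ) < stabilityNumber G := hk.trans hlt
      have : 0 < (t ^ 2) ^ 2 * stabilityNumber G * (stabilityNumber G - k) :=
        mul_pos (by positivity) (sub_pos.2 hlt)
      nlinarith
    · intro i j hi hj hij
      have hi' : i ∈ s := by by_contra hc; simp [hc] at hi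
      have hj' : j ∈ s := by by_contra hc; simp [hc] at hj
      exact hst i hi' j hj' hij.ne hij
  · intro hlt
    refine ⟨0, trivial, 1, one_pos, fun x _ _ => ?_⟩
    have hv0 : vsq (0 : EuclideanSpace ℝ (Fin n)) = 0 := by ext i; simp [vsq]
    simp only [quarticForm]
    rw [hv0, zero_dotProduct, PAk.MAk_form]
    have h0 : ∀ i, 0 ≤ vsq x i := fun i => sq_nonneg _
    have h1 := PAk.motzkin G _ (vsq x) rfl h0
    have h2 : 0 ≤ vsq x ⬝ᵥ (PAk.B G).mulVec (vsq x) := by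
      simp only [dotProduct, Matrix.mulVec]
      refine Finset.sum_nonneg fun i _ => mul_nonneg (h0 i) (Finset.sum_nonneg fun j _ =>
        mul_nonneg ?_ (h0 j))
      rw [PAk.B_apply]; split_ifs <;> norm_num
    have := mul_le_mul_of_nonneg_right hlt.le h2
    linarith
end

section
/- Let G be a graph on n vertices with adjacency matrix A and stability number α(G), and let k > 0 be a noninteger real scalar. Then the quartic form p_{A,k}(x) := (x²)^T (kA + kI - J) (x²) has a strict local minimizer over ℝ^n if and only if α(G) < k; moreover, when α(G) < k, the origin is a strict local minimizer of p_{A,k}. -/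
open Matrix
open scoped RealInnerProductSpace

namespace PAkAux

lemma stab_bdd {n : ℕ} (G : SimpleGraph (Fin n)) :
    BddAbove {k | ∃ s : Finset (Fin n), s.card = k ∧ ∀ i ∈ s, ∀ j ∈ s, i ≠ j → ¬ G.Adj i j} := by
  refine ⟨n, ?_⟩
  rintro k ⟨s, rfl, -⟩
  simpa using Finset.card_le_univ s

lemma le_stab {n : ℕ} (G : SimpleGraph (Fin n)) (s : Finset (Fin n))
    (hs : ∀ i ∈ s, ∀ j ∈ s, i ≠ j → ¬ G.Adj i j) : s.card ≤ stabilityNumber G :=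
  le_csSup (stab_bdd G) ⟨s, rfl, hs⟩

lemma exists_stab {n : ℕ} (G : SimpleGraph (Fin n)) :
    ∃ s : Finset (Fin n), s.card = stabilityNumber G ∧
      ∀ i ∈ s, ∀ j ∈ s, i ≠ j → ¬ G.Adj i j :=
  Nat.sSup_mem (s := {k | ∃ s : Finset (Fin n), s.card = k ∧
    ∀ i ∈ s, ∀ j ∈ s, i ≠ j → ¬ G.Adj i j}) ⟨0, ∅, by simp⟩ (stab_bdd G)

/-- The form `yᵀ (A + I) y` as a sum. -/
noncomputable def Q {n : ℕ} (G : SimpleGraph (Fin n)) [DecidableRel G.Adj] (y : Fin n → ℝ) : ℝ :=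
  y ⬝ᵥ (G.adjMatrix ℝ + 1).mulVec y

lemma form_eq {n : ℕ} (G : SimpleGraph (Fin n)) [DecidableRel G.Adj] (k : ℝ) (y : Fin n → ℝ) :
    y ⬝ᵥ (MAk (G.adjMatrix ℝ) k).mulVec y = k * Q G y - (∑ i, y i) ^ 2 := by
  have h : (Matrix.of (fun _ _ => (1 : ℝ)) : Matrix (Fin n) (Fin n) ℝ).mulVec y
      = fun _ => ∑ i, y i := by
    ext i; simp [mulVec, dotProduct]
  unfold MAk Q
  rw [← smul_add, sub_mulVec, h, smul_mulVec, dotProduct_sub, dotProduct_smul, smul_eq_mul]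
  congr 1
  simp [dotProduct, ← Finset.sum_mul, sq]

lemma Q_stable {n : ℕ} (G : SimpleGraph (Fin n)) [DecidableRel G.Adj] (y : Fin n → ℝ)
    (h : ∀ i j, y i ≠ 0 → y j ≠ 0 → ¬ G.Adj i j) : Q G y = ∑ i, y i ^ 2 := by
  have : y ⬝ᵥ (G.adjMatrix ℝ).mulVec y = 0 := by
    simp only [dotProduct, mulVec, Finset.mul_sum]
    refine Finset.sum_eq_zero fun i _ => Finset.sum_eq_zero fun j _ => ?_
    by_cases hi : y i = 0
    · simp [hi]
    by_cases hj : y j = 0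
    · simp [hj]
    simp [SimpleGraph.adjMatrix_apply, h i j hi hj]
  unfold Q
  rw [add_mulVec, dotProduct_add, this, one_mulVec, zero_add]
  simp [dotProduct, sq]

lemma Q_ge {n : ℕ} (G : SimpleGraph (Fin n)) [DecidableRel G.Adj] (y : Fin n → ℝ)
    (h : ∀ i, 0 ≤ y i) : ∑ i, y i ^ 2 ≤ Q G y := by
  have : 0 ≤ y ⬝ᵥ (G.adjMatrix ℝ).mulVec y := by
    simp only [dotProduct, mulVec, Finset.mul_sum]
    refine Finset.sum_nonneg fun i _ => Finset.sum_nonneg fun j _ => ?_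
    refine mul_nonneg (h i) (mul_nonneg ?_ (h j))
    rw [SimpleGraph.adjMatrix_apply]; split_ifs <;> norm_num
  unfold Q
  rw [add_mulVec, dotProduct_add, one_mulVec]
  simp only [dotProduct, sq] at *
  linarith

lemma Q_move {n : ℕ} (G : SimpleGraph (Fin n)) [DecidableRel G.Adj] (y : Fin n → ℝ)
    (i j : Fin n) (hij : G.Adj i j) (t : ℝ) :
    Q G (y + t • (Pi.single i 1 - Pi.single j 1)) = Q G y +
      2 * t * ((G.adjMatrix ℝ + 1).mulVec y i - (G.adjMatrix ℝ + 1).mulVec y j) := by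
  have hne := hij.ne
  set B : Matrix (Fin n) (Fin n) ℝ := G.adjMatrix ℝ + 1 with hB
  have hBT : Bᵀ = B := by simp [hB]
  set d : Fin n → ℝ := Pi.single i 1 - Pi.single j 1 with hd
  have h1 : d ⬝ᵥ B.mulVec y = B.mulVec y i - B.mulVec y j := by
    simp [hd, sub_dotProduct]
  have h2 : y ⬝ᵥ B.mulVec d = d ⬝ᵥ B.mulVec y := by
    rw [dotProduct_mulVec, ← mulVec_transpose, hBT, dotProduct_comm]
  have h3 : d ⬝ᵥ B.mulVec d = 0 := by
    simp [hd, sub_dotProduct, mulVec_sub, hB, hij, hij.symm, hne, hne.symm]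
  unfold Q
  rw [← hB, mulVec_add, add_dotProduct, dotProduct_add, dotProduct_add, mulVec_smul,
    smul_dotProduct, smul_dotProduct, dotProduct_smul, dotProduct_smul, h2, h3, h1]
  simp only [smul_eq_mul]
  ring

/-- Motzkin–Straus. -/
lemma motzkin {n : ℕ} (G : SimpleGraph (Fin n)) [DecidableRel G.Adj] (m : ℕ) :
    ∀ y : Fin n → ℝ, (∀ i, 0 ≤ y i) → (Finset.univ.filter fun i => y i ≠ 0).card = m →
    (∑ i, y i) ^ 2 ≤ stabilityNumber G * Q G y := by
  induction m using Nat.strong_induction_on with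
  | _ m ih =>
  intro y hy hm
  by_cases hst : ∀ i j, y i ≠ 0 → y j ≠ 0 → ¬ G.Adj i j
  · rw [Q_stable G y hst]
    set s := Finset.univ.filter fun i => y i ≠ 0 with hs
    have hc : s.card ≤ stabilityNumber G := le_stab G s (by
      intro i hi j hj _
      exact hst i j (by simpa [hs] using hi) (by simpa [hs] using hj))
    have e1 : ∑ i, y i = ∑ i ∈ s, y i := by
      rw [hs, Finset.sum_filter_ne_zero]
    have e2 : ∑ i ∈ s, y i ^ 2 ≤ ∑ i, y i ^ 2 :=
      Finset.sum_le_sum_of_subset_of_nonneg (Finset.subset_univ _) (fun _ _ _ => sq_nonneg _)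
    calc (∑ i, y i) ^ 2 = (∑ i ∈ s, y i) ^ 2 := by rw [e1]
      _ ≤ s.card * ∑ i ∈ s, y i ^ 2 := sq_sum_le_card_mul_sum_sq
      _ ≤ stabilityNumber G * ∑ i, y i ^ 2 := by
        have : (s.card : ℝ) ≤ stabilityNumber G := by exact_mod_cast hc
        have h0 : 0 ≤ ∑ i ∈ s, y i ^ 2 := Finset.sum_nonneg (fun _ _ => sq_nonneg _)
        exact mul_le_mul this e2 h0 (by positivity)
  · push Not at hst
    obtain ⟨i, j, hi, hj, hij⟩ := hst
    have key : ∃ i j, y i ≠ 0 ∧ y j ≠ 0 ∧ G.Adj i j ∧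
        (G.adjMatrix ℝ + 1).mulVec y i ≤ (G.adjMatrix ℝ + 1).mulVec y j := by
      rcases le_total ((G.adjMatrix ℝ + 1).mulVec y i) ((G.adjMatrix ℝ + 1).mulVec y j) with h | h
      · exact ⟨i, j, hi, hj, hij, h⟩
      · exact ⟨j, i, hj, hi, hij.symm, h⟩
    clear hi hj hij i j
    obtain ⟨i, j, hi, hj, hij, hle⟩ := key
    have hne := hij.ne
    set z := y + y j • (Pi.single i 1 - Pi.single j 1 : Fin n → ℝ) with hz
    have hQ := Q_move G y i j hij (y j)
    rw [← hz] at hQ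
    have hQle : Q G z ≤ Q G y := by
      rw [hQ]
      nlinarith [hy j]
    have hzj : z j = 0 := by simp [hz, hne.symm]
    have hzi : z i = y i + y j := by simp [hz, hne]
    have hzo : ∀ l, l ≠ i → l ≠ j → z l = y l := by
      intro l h1 h2; simp [hz, h1, h2]
    have hz0 : ∀ l, 0 ≤ z l := by
      intro l
      by_cases h1 : l = i
      · rw [h1, hzi]; linarith [hy i, hy j]
      by_cases h2 : l = j
      · rw [h2, hzj]
      · rw [hzo l h1 h2]; exact hy l
    have hsum : ∑ l, z l = ∑ l, y l := by
      simp [hz, Finset.sum_add_distrib, ← Finset.mul_sum]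
    have hlt : (Finset.univ.filter fun l => z l ≠ 0).card < m := by
      rw [← hm]
      apply Finset.card_lt_card
      rw [Finset.ssubset_iff_of_subset]
      · exact ⟨j, by simpa using hj, by simp [hzj]⟩
      · intro l hl
        simp only [Finset.mem_filter, Finset.mem_univ, true_and] at hl ⊢
        by_cases h1 : l = i
        · rw [h1]; exact hi
        by_cases h2 : l = j
        · rw [h2]; exact hj
        · rwa [← hzo l h1 h2]
    have := ih _ hlt z hz0 rfl
    rw [hsum] at this
    exact this.trans (mul_le_mul_of_nonneg_left hQle (by positivity))

lemma quartic_smul {n : ℕ} (M : Matrix (Fin n) (Fin n) ℝ) (c : ℝ)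
    (x : EuclideanSpace ℝ (Fin n)) : quarticForm M (c • x) = c ^ 4 * quarticForm M x := by
  have : vsq (c • x : EuclideanSpace ℝ (Fin n)) = c ^ 2 • vsq x := by
    ext i; simp [vsq, mul_pow]
  unfold quarticForm
  rw [this, mulVec_smul, dotProduct_smul, smul_dotProduct]
  simp only [smul_eq_mul]; ring

lemma quartic_zero {n : ℕ} (M : Matrix (Fin n) (Fin n) ℝ) : quarticForm M 0 = 0 := by
  have := quartic_smul M 0 0
  simpa using this

lemma origin {n : ℕ} (G : SimpleGraph (Fin n)) [DecidableRel G.Adj] (k : ℝ)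
    (h : (stabilityNumber G : ℝ) < k) :
    IsStrictLocalMinimizer (quarticForm (MAk (G.adjMatrix ℝ) k)) Set.univ 0 := by
  refine ⟨trivial, 1, one_pos, fun x _ hx _ => ?_⟩
  rw [quartic_zero]
  unfold quarticForm
  rw [form_eq]
  have hnn : ∀ i, 0 ≤ vsq x i := fun i => sq_nonneg _
  have h1 := motzkin G _ (vsq x) hnn rfl
  have h2 := Q_ge G (vsq x) hnn
  have h3 : 0 < ∑ i, vsq x i ^ 2 := by
    obtain ⟨i, hi⟩ : ∃ i, x i ≠ 0 := by
      by_contra hcon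
      push Not at hcon
      exact hx (by ext i; simpa using hcon i)
    refine Finset.sum_pos' (fun _ _ => sq_nonneg _) ⟨i, Finset.mem_univ _, ?_⟩
    have : vsq x i ≠ 0 := pow_ne_zero _ hi
    positivity
  nlinarith

lemma converse {n : ℕ} (G : SimpleGraph (Fin n)) [DecidableRel G.Adj] (k : ℝ) (hk : 0 < k)
    (xm : EuclideanSpace ℝ (Fin n))
    (h : IsStrictLocalMinimizer (quarticForm (MAk (G.adjMatrix ℝ) k)) Set.univ xm) :
    (stabilityNumber G : ℝ) < k := by
  obtain ⟨-, ε, hε, hmin⟩ := h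
  set p := quarticForm (MAk (G.adjMatrix ℝ) k) with hp
  have hx0 : xm = 0 := by
    by_contra hx
    have hn : 0 < ‖xm‖ := norm_pos_iff.mpr hx
    obtain ⟨t, ht, ht1, htε⟩ : ∃ t : ℝ, 0 < t ∧ t < 1 ∧ t * ‖xm‖ ≤ ε := by
      refine ⟨min (1/2) (ε / ‖xm‖), by positivity, by
        have := min_le_left (1/2 : ℝ) (ε / ‖xm‖); linarith, ?_⟩
      rw [← le_div_iff₀ hn]; exact min_le_right _ _
    have gen : ∀ s : ℝ, s ≠ 0 → |s| * ‖xm‖ ≤ ε → p xm < (1 + s) ^ 4 * p xm := by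
      intro s hs hsε
      have e : (1 + s) • xm - xm = s • xm := by rw [add_smul, one_smul]; abel
      rw [hp, ← quartic_smul, ← hp]
      apply hmin _ trivial
      · intro hc
        rw [hc, sub_self] at e
        exact (smul_ne_zero hs hx) e.symm
      · rw [e, norm_smul, Real.norm_eq_abs]; exact hsε
    have g1 := gen t ht.ne' (by rwa [abs_of_pos ht])
    have g2 := gen (-t) (by simpa using ht.ne') (by rwa [abs_neg, abs_of_pos ht])
    have a1 : 1 < (1 + t) ^ 4 := one_lt_pow₀ (by linarith) (by norm_num)
    have a2 : (1 + -t) ^ 4 < 1 := pow_lt_one₀ (by linarith) (by linarith) (by norm_num)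
    rcases le_total 0 (p xm) with h0 | h0 <;> nlinarith
  subst hx0
  obtain ⟨s, hs, hst⟩ := exists_stab G
  rw [← hs]
  rcases Finset.eq_empty_or_nonempty s with rfl | hne
  · simpa using hk
  let y : Fin n → ℝ := fun i => if i ∈ s then 1 else 0
  let x : EuclideanSpace ℝ (Fin n) := WithLp.toLp 2 y
  have hvx : vsq x = y := by
    ext i; simp [vsq, x, y]
  have hx : x ≠ 0 := by
    obtain ⟨i, hi⟩ := hne
    intro hc
    have : x i = 0 := by rw [hc]; rfl
    simp [x, y, hi] at this
  have hn : 0 < ‖x‖ := norm_pos_iff.mpr hx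
  have hc : 0 < ε / ‖x‖ := by positivity
  have := hmin ((ε / ‖x‖) • x) trivial (smul_ne_zero hc.ne' hx) (by
    rw [sub_zero, norm_smul, Real.norm_of_nonneg hc.le, div_mul_cancel₀ _ hn.ne'])
  rw [hp, quartic_zero, quartic_smul] at this
  have hpos := pos_of_mul_pos_right this (by positivity)
  unfold quarticForm at hpos
  rw [hvx, form_eq, Q_stable] at hpos
  · have e1 : ∑ i, y i = s.card := by simp [y]
    have e2 : ∑ i, y i ^ 2 = s.card := by simp [y]
    rw [e1, e2] at hpos
    have : (0:ℝ) < s.card := by exact_mod_cast hne.card_pos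
    nlinarith
  · intro i j hi hj hadj
    have hi' : i ∈ s := by by_contra hh; simp [y, hh] at hi
    have hj' : j ∈ s := by by_contra hh; simp [y, hh] at hj
    exact hst i hi' j hj' hadj.ne hadj

end PAkAux

/-- For `k > 0` noninteger, the quartic form `p_{A,k}` has a strict local minimizer over `ℝⁿ`
iff `α(G) < k`; moreover, when `α(G) < k` the origin is a strict local minimizer. -/
theorem pAk_has_strictLocalMinimizer_iff {n : ℕ} (G : SimpleGraph (Fin n)) [DecidableRel G.Adj]
    (k : ℝ) (hk : 0 < k) (hk' : ∀ m : ℤ, (m : ℝ) ≠ k) :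
    ((∃ xm, IsStrictLocalMinimizer (quarticForm (MAk (G.adjMatrix ℝ) k)) Set.univ xm) ↔
        (stabilityNumber G : ℝ) < k) ∧
    ((stabilityNumber G : ℝ) < k →
        IsStrictLocalMinimizer (quarticForm (MAk (G.adjMatrix ℝ) k)) Set.univ 0) := by
  exact ⟨⟨fun ⟨xm, h⟩ => PAkAux.converse G k hk xm h,
    fun h => ⟨0, PAkAux.origin G k h⟩⟩, PAkAux.origin G k⟩
end

section
/- Let G be a graph on n vertices with adjacency matrix A, and let k > 0 be a noninteger real scalar. Then the quartic form p_{A,k}(x) := (x²)^T (kA + kI - J) (x²) has no nonzero second-order point; i.e., there is no x̄ ∈ ℝ^n with x̄ ≠ 0, ∇p_{A,k}(x̄) = 0, and ∇²p_{A,k}(x̄) positive semidefinite. -/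
open Matrix
open scoped RealInnerProductSpace

/-- Explicit gradient of the quartic form. -/
noncomputable def gradF {n : ℕ} (M : Matrix (Fin n) (Fin n) ℝ) (x : EuclideanSpace ℝ (Fin n)) :
    EuclideanSpace ℝ (Fin n) :=
  WithLp.toLp 2 (fun i => 4 * x i * ∑ j, M i j * (x j) ^ 2)

lemma quarticForm_eq {n : ℕ} (M : Matrix (Fin n) (Fin n) ℝ) :
    quarticForm M = fun x => ∑ i, (x i) ^ 2 * ∑ j, M i j * (x j) ^ 2 := by
  funext x
  simp [quarticForm, vsq, dotProduct, Matrix.mulVec]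

lemma line_hasDerivAt {n : ℕ} (x v : EuclideanSpace ℝ (Fin n)) :
    HasDerivAt (fun t : ℝ => x + t • v) v 0 := by
  simpa using ((hasDerivAt_id (0 : ℝ)).smul_const v).const_add x

lemma coord_hasDerivAt (a b : ℝ) : HasDerivAt (fun t : ℝ => a + t * b) b 0 := by
  simpa using ((hasDerivAt_id (0 : ℝ)).mul_const b).const_add a

lemma coord_sq_hasDerivAt (a b : ℝ) : HasDerivAt (fun t : ℝ => (a + t * b) ^ 2) (2 * a * b) 0 := by
  simpa using (coord_hasDerivAt a b).fun_pow 2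

lemma row_hasDerivAt {n : ℕ} (c : Fin n → ℝ) (x v : EuclideanSpace ℝ (Fin n)) :
    HasDerivAt (fun t : ℝ => ∑ j, c j * (x j + t * v j) ^ 2) (∑ j, c j * (2 * x j * v j)) 0 :=
  HasDerivAt.fun_sum fun j _ => (coord_sq_hasDerivAt (x j) (v j)).const_mul (c j)

lemma quartic_fderiv {n : ℕ} (M : Matrix (Fin n) (Fin n) ℝ) (hM : ∀ i j, M i j = M j i)
    (x v : EuclideanSpace ℝ (Fin n)) :
    fderiv ℝ (quarticForm M) x v = ∑ i, 4 * x i * (∑ j, M i j * (x j) ^ 2) * v i := by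
  have hd : DifferentiableAt ℝ (quarticForm M) x := by
    rw [quarticForm_eq]; fun_prop
  have h1 : HasDerivAt (fun t : ℝ => quarticForm M (x + t • v)) (fderiv ℝ (quarticForm M) x v) 0 := by
    have hf : HasFDerivAt (quarticForm M) (fderiv ℝ (quarticForm M) x) (x + (0 : ℝ) • v) := by
      simpa using hd.hasFDerivAt
    exact hf.comp_hasDerivAt (0 : ℝ) (line_hasDerivAt x v)
  have h2 : HasDerivAt (fun t : ℝ => quarticForm M (x + t • v))
      (∑ i, ((2 * x i * v i) * (∑ j, M i j * (x j) ^ 2)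
        + (x i) ^ 2 * ∑ j, M i j * (2 * x j * v j))) 0 := by
    rw [quarticForm_eq]
    simp only [PiLp.add_apply, PiLp.smul_apply, smul_eq_mul]
    refine HasDerivAt.fun_sum fun i _ => ?_
    simpa using (coord_sq_hasDerivAt (x i) (v i)).fun_mul (row_hasDerivAt (M i) x v)
  rw [h1.unique h2, Finset.sum_add_distrib]
  have h3 : ∑ i, (x i) ^ 2 * ∑ j, M i j * (2 * x j * v j)
      = ∑ i, (2 * x i * v i) * (∑ j, M i j * (x j) ^ 2) := by
    simp only [Finset.mul_sum]
    rw [Finset.sum_comm]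
    refine Finset.sum_congr rfl fun i _ => Finset.sum_congr rfl fun j _ => ?_
    rw [hM i j]; ring
  rw [h3, ← Finset.sum_add_distrib]
  exact Finset.sum_congr rfl fun i _ => by ring

lemma gradient_quartic {n : ℕ} (M : Matrix (Fin n) (Fin n) ℝ) (hM : ∀ i j, M i j = M j i) :
    gradient (quarticForm M) = gradF M := by
  funext x
  refine ext_inner_right ℝ fun v => ?_
  rw [inner_gradient_left, quartic_fderiv M hM]
  simp [gradF, PiLp.inner_apply, mul_comm]

lemma hess_quartic {n : ℕ} (M : Matrix (Fin n) (Fin n) ℝ) (x v : EuclideanSpace ℝ (Fin n)) :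
    ⟪fderiv ℝ (gradF M) x v, v⟫ = ∑ i, (4 * v i * (∑ j, M i j * (x j) ^ 2)
        + 4 * x i * ∑ j, M i j * (2 * x j * v j)) * v i := by
  have hd : DifferentiableAt ℝ (gradF M) x := by
    rw [differentiableAt_euclidean]
    intro i
    simp only [gradF]
    fun_prop
  have h1 : HasDerivAt (fun t : ℝ => gradF M (x + t • v)) (fderiv ℝ (gradF M) x v) 0 := by
    have hf : HasFDerivAt (gradF M) (fderiv ℝ (gradF M) x) (x + (0 : ℝ) • v) := by
      simpa using hd.hasFDerivAt
    exact hf.comp_hasDerivAt (0 : ℝ) (line_hasDerivAt x v)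
  have h1' := h1.inner ℝ (hasDerivAt_const (0 : ℝ) v)
  have h2 : HasDerivAt (fun t : ℝ => ⟪gradF M (x + t • v), v⟫)
      (∑ i, (4 * v i * (∑ j, M i j * (x j) ^ 2)
        + 4 * x i * ∑ j, M i j * (2 * x j * v j)) * v i) 0 := by
    have he : (fun t : ℝ => ⟪gradF M (x + t • v), v⟫) =
        fun t : ℝ => ∑ i, (4 * (x i + t * v i) * ∑ j, M i j * (x j + t * v j) ^ 2) * v i := by
      funext t
      simp [gradF, PiLp.inner_apply, mul_comm]
    rw [he]
    refine HasDerivAt.fun_sum fun i _ => ?_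
    simpa using ((((coord_hasDerivAt (x i) (v i)).const_mul 4).fun_mul
      (row_hasDerivAt (M i) x v)).mul_const (v i))
  simpa using h1'.unique h2

lemma three_sum {n : ℕ} {i j l : Fin n} (hij : i ≠ j) (hjl : j ≠ l) (hil : i ≠ l) (f w : Fin n → ℝ)
    (hw : ∀ a, w a = if a = i then 1 else if a = j then -2 else if a = l then 1 else 0) :
    ∑ a, w a * f a = f i - 2 * f j + f l := by
  have : ∀ a, w a * f a = (if a = i then f i else 0) + (if a = j then -2 * f j else 0)
      + (if a = l then f l else 0) := by
    intro a
    rw [hw]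
    by_cases h1 : a = i
    · subst h1; simp [hij, hil]
    by_cases h2 : a = j
    · subst h2; simp [h1, hjl]
    by_cases h3 : a = l
    · subst h3; simp [h1, h2]
    simp [h1, h2, h3]
  simp only [this, Finset.sum_add_distrib]
  simp
  ring

/-- For `k > 0` noninteger, the quartic form `p_{A,k}` has no nonzero second-order point:
no nonzero point with vanishing gradient and positive semidefinite Hessian. -/
theorem pAk_no_nonzero_second_order_point {n : ℕ} (G : SimpleGraph (Fin n))
    [DecidableRel G.Adj] (k : ℝ) (hk : 0 < k) (hk' : ∀ m : ℤ, (m : ℝ) ≠ k) :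
    ¬ ∃ xm : EuclideanSpace ℝ (Fin n), xm ≠ 0 ∧
        gradient (quarticForm (MAk (G.adjMatrix ℝ) k)) xm = 0 ∧
        ∀ v : EuclideanSpace ℝ (Fin n),
          0 ≤ ⟪fderiv ℝ (gradient (quarticForm (MAk (G.adjMatrix ℝ) k))) xm v, v⟫ := by
  rintro ⟨x, hx0, hg, hH⟩
  set M := MAk (G.adjMatrix ℝ) k with hMdef
  have hMe : ∀ i j, M i j = k * (if i = j ∨ G.Adj i j then 1 else 0) - 1 := by
    intro i j
    by_cases h : i = j
    · subst h; simp [hMdef, MAk]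
    · simp [hMdef, MAk, h, SimpleGraph.adjMatrix_apply, Matrix.one_apply]
  have hM : ∀ i j, M i j = M j i := by
    intro i j
    rw [hMe, hMe]
    simp [eq_comm, G.adj_comm]
  rw [gradient_quartic M hM] at hg hH
  have hrow : ∀ i, x i ≠ 0 → ∑ j, M i j * (x j) ^ 2 = 0 := by
    intro i hi
    have := congrArg (fun z : EuclideanSpace ℝ (Fin n) => z i) hg
    simp only [gradF, PiLp.zero_apply] at this
    rcases mul_eq_zero.1 this with h | h
    · exact absurd h (by simp [hi])
    · exact h
  -- positive semidefiniteness on the support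
  have hpsd : ∀ w : Fin n → ℝ, (∀ i, x i = 0 → w i = 0) →
      0 ≤ ∑ i, w i * ∑ j, w j * M i j := by
    intro w hw
    have h := hH (WithLp.toLp 2 (fun i => w i / x i))
    rw [hess_quartic] at h
    have he : ∑ i, (4 * (w i / x i) * (∑ j, M i j * (x j) ^ 2)
        + 4 * x i * ∑ j, M i j * (2 * x j * (w j / x j))) * (w i / x i)
        = 8 * ∑ i, w i * ∑ j, w j * M i j := by
      rw [Finset.mul_sum]
      refine Finset.sum_congr rfl fun i _ => ?_
      have hin : ∑ j, M i j * (2 * x j * (w j / x j)) = 2 * ∑ j, w j * M i j := by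
        rw [Finset.mul_sum]
        refine Finset.sum_congr rfl fun j _ => ?_
        by_cases hj : x j = 0
        · simp [hj, hw j hj]
        · field_simp
      rw [hin]
      by_cases hi : x i = 0
      · simp [hi, hw i hi]
      · rw [hrow i hi]; field_simp; ring
    have h' : 0 ≤ 8 * ∑ i, w i * ∑ j, w j * M i j := by
      rw [← he]; exact h
    linarith
  have htrans : ∀ i j l, x i ≠ 0 → x j ≠ 0 → x l ≠ 0 → (i = j ∨ G.Adj i j) → (j = l ∨ G.Adj j l) →
      (i = l ∨ G.Adj i l) := by
    intro i j l hi hj hl h1 h2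
    by_cases hij : i = j
    · subst hij; exact h2
    by_cases hjl : j = l
    · subst hjl; exact h1
    by_contra hcon
    have hil : i ≠ l := fun h => hcon (Or.inl h)
    have a1 : G.Adj i j := h1.resolve_left hij
    have a2 : G.Adj j l := h2.resolve_left hjl
    have a3 : ¬ G.Adj i l := fun h => hcon (Or.inr h)
    have h := hpsd (fun a => if a = i then 1 else if a = j then -2 else if a = l then 1 else 0) (by
      intro a ha
      have e1 : a ≠ i := by rintro rfl; exact hi ha
      have e2 : a ≠ j := by rintro rfl; exact hj ha
      have e3 : a ≠ l := by rintro rfl; exact hl ha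
      simp [e1, e2, e3])
    rw [three_sum hij hjl hil _ _ (fun a => rfl), three_sum hij hjl hil _ _ (fun a => rfl),
      three_sum hij hjl hil _ _ (fun a => rfl), three_sum hij hjl hil _ _ (fun a => rfl)] at h
    simp only [hMe] at h
    simp [a1, a2, a3, a1.symm, a2.symm, G.adj_comm l i, hil, Ne.symm hil] at h
    linarith
  classical
  set S : Finset (Fin n) := Finset.univ.filter (fun i => x i ≠ 0) with hS
  set r : Fin n → Finset (Fin n) := fun i => S.filter (fun j => i = j ∨ G.Adj i j) with hr
  set σ : ℝ := ∑ j, (x j) ^ 2 with hσ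
  have hσS : ∑ j ∈ S, (x j) ^ 2 = σ := by
    rw [hS, Finset.sum_filter]
    refine Finset.sum_congr rfl fun j _ => ?_
    by_cases h : x j = 0 <;> simp [h]
  have hσpos : 0 < σ := by
    obtain ⟨i, hi⟩ : ∃ i, x i ≠ 0 := by
      by_contra hcon
      push Not at hcon
      exact hx0 (by ext i; simpa using hcon i)
    exact Finset.sum_pos' (fun j _ => sq_nonneg _) ⟨i, Finset.mem_univ _, by positivity⟩
  have hrsum : ∀ i ∈ S, k * ∑ j ∈ r i, (x j) ^ 2 = σ := by
    intro i hi
    have h := hrow i (by simpa [hS] using hi)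
    have e : ∑ j, M i j * (x j) ^ 2 = k * ∑ j ∈ r i, (x j) ^ 2 - σ := by
      simp only [hr, hσ, hS]
      rw [Finset.filter_filter, Finset.sum_filter, Finset.mul_sum,
        ← Finset.sum_sub_distrib]
      refine Finset.sum_congr rfl fun j _ => ?_
      rw [hMe]
      by_cases h0 : x j = 0
      · simp [h0]
      · by_cases h1 : i = j ∨ G.Adj i j
        · simp only [h0, h1, if_true, ne_eq, not_false_eq_true, and_self]; ring
        · simp only [h1, if_false, and_false]; ring
    linarith
  have hfib : ∀ t ∈ S, S.filter (fun i => r i = r t) = r t := by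
    intro t ht
    have ht' : x t ≠ 0 := by simpa [hS] using ht
    ext i
    constructor
    · intro hi
      rw [Finset.mem_filter] at hi
      rw [← hi.2]
      simp [hr, hi.1]
    · intro hi
      rw [hr, Finset.mem_filter] at hi
      obtain ⟨hiS, hti⟩ := hi
      have hi' : x i ≠ 0 := by simpa [hS] using hiS
      have hit : i = t ∨ G.Adj i t := hti.imp Eq.symm (fun h => h.symm)
      refine Finset.mem_filter.2 ⟨hiS, ?_⟩
      ext j
      simp only [hr, Finset.mem_filter]
      refine and_congr_right fun hj => ?_
      have hj' : x j ≠ 0 := by simpa [hS] using hj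
      exact ⟨fun h => htrans t i j ht' hi' hj' hti h, fun h => htrans i t j hi' ht' hj' hit h⟩
  have hcount : k * σ = (S.image r).card * σ := by
    have hs := Finset.sum_fiberwise_of_maps_to (s := S) (t := S.image r) (g := r)
      (fun i hi => Finset.mem_image_of_mem r hi) (fun i => (x i) ^ 2)
    rw [hσS] at hs
    conv_lhs => rw [← hs]
    rw [Finset.mul_sum, ← nsmul_eq_mul]
    refine Finset.sum_eq_card_nsmul fun c hc => ?_
    obtain ⟨t, ht, rfl⟩ := Finset.mem_image.1 hc
    rw [hfib t ht]
    exact hrsum t ht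
  have := mul_right_cancel₀ hσpos.ne' hcount
  exact hk' ((S.image r).card : ℤ) (by rw [this]; push_cast; rfl)
end

section
/- Let G be a graph on n vertices with adjacency matrix A and let k be a real scalar. If x̄ ∈ ℝ^n is a nonzero second-order point of the quartic form p_{A,k}(x) := (x²)^T (kA + kI - J) (x²), then the induced subgraph G_{x̄} of G on the vertices corresponding to the nonzero entries of x̄ satisfies α(G_{x̄}) = k. -/
open Matrix
open scoped RealInnerProductSpace

theorem quarticForm_apply_sum {n : ℕ} (M : Matrix (Fin n) (Fin n) ℝ) (x : EuclideanSpace ℝ (Fin n)) :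
    quarticForm M x = ∑ i, ∑ j, x i ^ 2 * (M i j * x j ^ 2) := by
  simp [quarticForm, vsq, dotProduct, Matrix.mulVec, Finset.mul_sum]

theorem hasFDerivAt_coord {n : ℕ} (i : Fin n) (x : EuclideanSpace ℝ (Fin n)) :
    HasFDerivAt (fun x : EuclideanSpace ℝ (Fin n) => x i)
      (EuclideanSpace.proj i : EuclideanSpace ℝ (Fin n) →L[ℝ] ℝ) x :=
  (EuclideanSpace.proj i : EuclideanSpace ℝ (Fin n) →L[ℝ] ℝ).hasFDerivAt

/-- Explicit gradient of the quartic form. -/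
noncomputable def gradQ {n : ℕ} (M : Matrix (Fin n) (Fin n) ℝ) (x : EuclideanSpace ℝ (Fin n)) :
    EuclideanSpace ℝ (Fin n) :=
  WithLp.toLp 2 (fun i => 4 * x i * ∑ j, M i j * x j ^ 2)

theorem gradient_quarticForm {n : ℕ} (M : Matrix (Fin n) (Fin n) ℝ) (hM : ∀ i j, M i j = M j i) :
    gradient (quarticForm M) = gradQ M := by
  funext x
  apply HasGradientAt.gradient
  rw [hasGradientAt_iff_hasFDerivAt]
  have h : HasFDerivAt (fun x : EuclideanSpace ℝ (Fin n) =>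
      ∑ i, ∑ j, x i ^ 2 * (M i j * x j ^ 2)) _ x :=
    HasFDerivAt.fun_sum fun i _ => HasFDerivAt.fun_sum fun j _ =>
      ((hasFDerivAt_coord i x).pow 2).mul (((hasFDerivAt_coord j x).pow 2).const_mul (M i j))
  have e : quarticForm M = fun x : EuclideanSpace ℝ (Fin n) =>
      ∑ i, ∑ j, x i ^ 2 * (M i j * x j ^ 2) := funext (quarticForm_apply_sum M)
  rw [e]
  refine h.congr_fderiv (Eq.symm ?_)
  refine ContinuousLinearMap.ext fun v => ?_
  simp [gradQ, PiLp.inner_apply, _root_.sum_apply]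
  have hs : ∑ i, ∑ j, M j i * x i ^ 2 * x j * v j = ∑ i, ∑ j, M i j * x j ^ 2 * x i * v i :=
    Finset.sum_comm
  have hl : ∑ i, v i * (4 * x i * ∑ j, M i j * x j ^ 2)
      = 4 * ∑ i, ∑ j, M i j * x j ^ 2 * x i * v i := by
    simp only [Finset.mul_sum]
    refine Finset.sum_congr rfl fun i _ => Finset.sum_congr rfl fun j _ => by ring
  have hr : ∑ i, ∑ j, (x i ^ 2 * (M i j * (2 * x j * v j)) + M i j * x j ^ 2 * (2 * x i * v i))
      = 2 * (∑ i, ∑ j, M j i * x i ^ 2 * x j * v j)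
        + 2 * ∑ i, ∑ j, M i j * x j ^ 2 * x i * v i := by
    simp only [Finset.mul_sum, ← Finset.sum_add_distrib]
    refine Finset.sum_congr rfl fun i _ => Finset.sum_congr rfl fun j _ => by
      rw [hM j i]; ring
  rw [hl, hr, hs]; ring

theorem hess_gradQ {n : ℕ} (M : Matrix (Fin n) (Fin n) ℝ) (x v : EuclideanSpace ℝ (Fin n)) :
    ⟪fderiv ℝ (gradQ M) x v, v⟫ =
      ∑ i, (4 * (v i) ^ 2 * ∑ j, M i j * x j ^ 2)
        + 8 * ∑ i, ∑ j, x i * v i * M i j * (x j * v j) := by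
  have hd : ∀ i, HasFDerivAt (fun x : EuclideanSpace ℝ (Fin n) =>
      4 * x i * ∑ j, M i j * x j ^ 2) _ x := fun i =>
    ((hasFDerivAt_coord i x).const_mul 4).mul (HasFDerivAt.fun_sum fun j _ =>
      ((hasFDerivAt_coord j x).pow 2).const_mul (M i j))
  have hdiff : DifferentiableAt ℝ (gradQ M) x := by
    rw [differentiableAt_euclidean]
    exact fun i => (hd i).differentiableAt
  have hc : ∀ i, (fderiv ℝ (gradQ M) x v) i =
      4 * v i * (∑ j, M i j * x j ^ 2) + 4 * x i * ∑ j, M i j * (2 * x j * v j) := by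
    intro i
    have h0 : HasFDerivAt (fun x => gradQ M x i)
        ((EuclideanSpace.proj i : EuclideanSpace ℝ (Fin n) →L[ℝ] ℝ).comp
          (fderiv ℝ (gradQ M) x)) x :=
      (hasFDerivAt_coord i (gradQ M x)).comp x hdiff.hasFDerivAt
    have h1 := h0.unique (hd i)
    have h2 := DFunLike.congr_fun h1 v
    simp [_root_.sum_apply] at h2
    rw [h2]; ring
  simp only [PiLp.inner_apply, hc, RCLike.inner_apply, conj_trivial]
  simp only [Finset.mul_sum, ← Finset.sum_add_distrib]
  refine Finset.sum_congr rfl fun i _ => ?_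
  refine Finset.sum_congr rfl fun j _ => by ring

theorem MAk_apply {n : ℕ} (G : SimpleGraph (Fin n)) [DecidableRel G.Adj] (k : ℝ) (i j : Fin n) :
    MAk (G.adjMatrix ℝ) k i j = (if G.Adj i j ∨ i = j then k else 0) - 1 := by
  by_cases h : i = j
  · subst h; simp [MAk]
  · by_cases h' : G.Adj i j <;> simp [MAk, h, h']

theorem card_le_of_hess {n : ℕ} (G : SimpleGraph (Fin n))
    [DecidableRel G.Adj] (k : ℝ) (xm : EuclideanSpace ℝ (Fin n))
    (h1 : ∀ i, xm i ≠ 0 → ∑ j, MAk (G.adjMatrix ℝ) k i j * xm j ^ 2 = 0)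
    (hhess : ∀ v : EuclideanSpace ℝ (Fin n),
        0 ≤ ⟪fderiv ℝ (gradQ (MAk (G.adjMatrix ℝ) k)) xm v, v⟫)
    (T : Finset (Fin n)) (hT : ∀ i ∈ T, xm i ≠ 0)
    (hst : ∀ i ∈ T, ∀ j ∈ T, i ≠ j → ¬ G.Adj i j) (hne : T.Nonempty) : (T.card : ℝ) ≤ k := by
  have h := hhess (WithLp.toLp 2 fun i => if i ∈ T then (xm i)⁻¹ else 0)
  rw [hess_gradQ] at h
  have e1 : ∀ i, xm i * (if i ∈ T then (xm i)⁻¹ else 0) = if i ∈ T then 1 else 0 := by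
    intro i; split_ifs with hi
    · exact mul_inv_cancel₀ (hT i hi)
    · simp
  have e2 : ∀ i, 4 * (if i ∈ T then (xm i)⁻¹ else 0) ^ 2 *
      ∑ j, MAk (G.adjMatrix ℝ) k i j * xm j ^ 2 = 0 := by
    intro i; split_ifs with hi
    · rw [h1 i (hT i hi)]; simp
    · simp
  simp only [e1, e2, Finset.sum_const_zero, zero_add] at h
  have e3 : ∑ i, ∑ j, (if i ∈ T then (1:ℝ) else 0) * MAk (G.adjMatrix ℝ) k i j *
      (if j ∈ T then 1 else 0) = ∑ i ∈ T, ∑ j ∈ T, MAk (G.adjMatrix ℝ) k i j := by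
    simp [Finset.sum_ite_mem]
  have e4 : ∑ i ∈ T, ∑ j ∈ T, MAk (G.adjMatrix ℝ) k i j = ∑ i ∈ T, (k - T.card) := by
    refine Finset.sum_congr rfl fun i hi => ?_
    have : ∀ j ∈ T, MAk (G.adjMatrix ℝ) k i j = (if i = j then k else 0) - 1 := by
      intro j hj
      rw [MAk_apply]
      by_cases hij : i = j
      · simp [hij]
      · simp [hij, hst i hi j hj hij]
    rw [Finset.sum_congr rfl this, Finset.sum_sub_distrib]
    simp [hi]
  rw [e3, e4, Finset.sum_const, nsmul_eq_mul] at h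
  have hp : (0:ℝ) < T.card := by exact_mod_cast hne.card_pos
  by_contra! hk
  nlinarith

theorem le_card_of_dominating {n : ℕ} (G : SimpleGraph (Fin n))
    [DecidableRel G.Adj] (k : ℝ) (xm : EuclideanSpace ℝ (Fin n)) (hxm : ∃ i, xm i ≠ 0)
    (h1 : ∀ i, xm i ≠ 0 → ∑ j, MAk (G.adjMatrix ℝ) k i j * xm j ^ 2 = 0)
    (hk : 0 < k)
    (T : Finset (Fin n)) (hT : ∀ i ∈ T, xm i ≠ 0)
    (hdom : ∀ j, xm j ≠ 0 → ∃ i ∈ T, G.Adj i j ∨ i = j) : k ≤ T.card := by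
  have hpos : 0 < ∑ j, xm j ^ 2 := by
    obtain ⟨i, hi⟩ := hxm
    exact Finset.sum_pos' (fun _ _ => sq_nonneg _) ⟨i, Finset.mem_univ _, by positivity⟩
  have hrow : ∀ i ∈ T, k * ∑ j, (if G.Adj i j ∨ i = j then xm j ^ 2 else 0) = ∑ j, xm j ^ 2 := by
    intro i hi
    have := h1 i (hT i hi)
    simp only [MAk_apply, sub_mul, one_mul, Finset.sum_sub_distrib, sub_eq_zero] at this
    rw [← this, Finset.mul_sum]
    refine Finset.sum_congr rfl fun j _ => by split_ifs <;> simp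
  have hsum : ∑ j, xm j ^ 2 ≤ ∑ i ∈ T, ∑ j, (if G.Adj i j ∨ i = j then xm j ^ 2 else 0) := by
    rw [Finset.sum_comm]
    refine Finset.sum_le_sum fun j _ => ?_
    by_cases hj : xm j = 0
    · simp [hj]
    · obtain ⟨i, hi, hij⟩ := hdom j hj
      have := Finset.single_le_sum (s := T)
        (f := fun i => if G.Adj i j ∨ i = j then xm j ^ 2 else 0)
        (fun i _ => by split_ifs <;> positivity) hi
      simpa [hij] using this
  have := mul_le_mul_of_nonneg_left hsum hk.le
  rw [Finset.mul_sum T, Finset.sum_congr rfl hrow, Finset.sum_const, nsmul_eq_mul] at this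
  exact le_of_mul_le_mul_right this hpos

/-- If `xm` is a nonzero second-order point of the quartic form `p_{A,k}`, then the induced
subgraph of `G` on the vertices where `xm` is nonzero has stability number equal to `k`. -/
theorem stabilityNumber_induce_eq_of_second_order_point {n : ℕ} (G : SimpleGraph (Fin n))
    [DecidableRel G.Adj] (k : ℝ) (xm : EuclideanSpace ℝ (Fin n)) (hxm : xm ≠ 0)
    (hgrad : gradient (quarticForm (MAk (G.adjMatrix ℝ) k)) xm = 0)
    (hhess : ∀ v : EuclideanSpace ℝ (Fin n),
        0 ≤ ⟪fderiv ℝ (gradient (quarticForm (MAk (G.adjMatrix ℝ) k))) xm v, v⟫) :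
    (stabilityNumber (G.induce {i : Fin n | xm i ≠ 0}) : ℝ) = k := by
  have hsymm : ∀ i j, MAk (G.adjMatrix ℝ) k i j = MAk (G.adjMatrix ℝ) k j i := by
    intro i j; rw [MAk_apply, MAk_apply]; simp [G.adj_comm, eq_comm]
  rw [gradient_quarticForm _ hsymm] at hgrad hhess
  have h1 : ∀ i, xm i ≠ 0 → ∑ j, MAk (G.adjMatrix ℝ) k i j * xm j ^ 2 = 0 := by
    intro i hi
    have := congrArg (fun z : EuclideanSpace ℝ (Fin n) => z i) hgrad
    simpa [gradQ, hi] using this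
  have hex : ∃ i, xm i ≠ 0 := by
    by_contra! h
    exact hxm (by ext i; simpa using h i)
  have hk : 0 < k := by
    obtain ⟨i, hi⟩ := hex
    have := card_le_of_hess G k xm h1 hhess {i} (by simpa using hi) (by simp) (by simp)
    simp at this; linarith
  set S : Set ℕ := {m | ∃ s : Finset {i : Fin n | xm i ≠ 0}, s.card = m ∧
    ∀ i ∈ s, ∀ j ∈ s, i ≠ j → ¬ (G.induce {i : Fin n | xm i ≠ 0}).Adj i j} with hS
  have hbdd : BddAbove S := by
    refine ⟨Fintype.card {i : Fin n | xm i ≠ 0}, ?_⟩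
    rintro m ⟨s, rfl, -⟩
    exact Finset.card_le_univ s
  have hmem : sSup S ∈ S := Nat.sSup_mem ⟨0, ∅, by simp⟩ hbdd
  obtain ⟨s, hs, hst⟩ := hmem
  have hα : stabilityNumber (G.induce {i : Fin n | xm i ≠ 0}) = s.card := hs.symm
  have hdom : ∀ j : {i : Fin n | xm i ≠ 0}, ∃ i ∈ s, G.Adj i j ∨ i = j := by
    intro j
    by_contra! hj
    have hjs : j ∉ s := fun h => (hj j h).2 rfl
    have : (insert j s).card ∈ S := by
      refine ⟨insert j s, rfl, ?_⟩
      intro a ha b hb hab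
      rw [Finset.mem_insert] at ha hb
      rcases ha with rfl | ha <;> rcases hb with rfl | hb
      · exact absurd rfl hab
      · exact fun h => (hj b hb).1 h.symm
      · exact fun h => (hj a ha).1 h
      · exact hst a ha b hb hab
    have := le_csSup hbdd this
    rw [Finset.card_insert_of_notMem hjs] at this
    omega
  let T : Finset (Fin n) := s.map (Function.Embedding.subtype _)
  have hTc : T.card = s.card := Finset.card_map _
  have hT : ∀ i ∈ T, xm i ≠ 0 := by
    intro i hi
    obtain ⟨a, -, rfl⟩ := Finset.mem_map.1 hi
    exact a.2
  have hTst : ∀ i ∈ T, ∀ j ∈ T, i ≠ j → ¬ G.Adj i j := by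
    intro i hi j hj hij
    obtain ⟨a, ha, rfl⟩ := Finset.mem_map.1 hi
    obtain ⟨b, hb, rfl⟩ := Finset.mem_map.1 hj
    exact hst a ha b hb (fun h => hij (by rw [h]))
  have hTdom : ∀ j, xm j ≠ 0 → ∃ i ∈ T, G.Adj i j ∨ i = j := by
    intro j hj
    obtain ⟨i, hi, hij⟩ := hdom ⟨j, hj⟩
    refine ⟨i, Finset.mem_map.2 ⟨i, hi, rfl⟩, hij.imp id fun h => by rw [h]⟩
  have hne : T.Nonempty := by
    obtain ⟨i, hi⟩ := hex
    obtain ⟨a, ha, -⟩ := hTdom i hi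
    exact ⟨a, ha⟩
  rw [hα, ← hTc]
  exact le_antisymm (card_le_of_hess G k xm h1 hhess T hT hTst hne)
    (le_card_of_dominating G k xm hex h1 hk T hT hTdom)
end

section
/- Let G be a graph on n vertices with adjacency matrix A and stability number α(G), and let k > 0 be a noninteger real scalar. Then the quadratic form q_{A,k}(x) := x^T (kA + kI - J) x has a local minimizer over the nonnegative orthant {x ∈ ℝ^n : x ≥ 0} if and only if α(G) < k. -/
open Matrix
open scoped RealInnerProductSpace

section Helpers

open Filter Topology Finset

/-- Row action of `A + I`. -/
def nbr {n : ℕ} (G : SimpleGraph (Fin n)) [DecidableRel G.Adj] (x : Fin n → ℝ) (i : Fin n) : ℝ :=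
  x i + ∑ j, if G.Adj i j then x j else 0

/-- The bilinear form of the matrix. -/
def bil {n : ℕ} (G : SimpleGraph (Fin n)) [DecidableRel G.Adj] (k : ℝ) (x y : Fin n → ℝ) : ℝ :=
  k * ∑ i, x i * nbr G y i - (∑ i, x i) * ∑ i, y i

lemma quadForm_eq {n : ℕ} (G : SimpleGraph (Fin n)) [DecidableRel G.Adj] (k : ℝ)
    (x : EuclideanSpace ℝ (Fin n)) :
    quadForm (MAk (G.adjMatrix ℝ) k) x = bil G k (fun i => x i) (fun i => x i) := by
  have h : ∀ i, (MAk (G.adjMatrix ℝ) k).mulVec (fun i => x i) i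
      = k * nbr G (fun i => x i) i - ∑ j, x j := by
    intro i
    simp only [MAk, nbr, Matrix.mulVec, dotProduct, Matrix.sub_apply, Matrix.add_apply,
      Matrix.smul_apply, SimpleGraph.adjMatrix_apply, Matrix.one_apply, Matrix.of_apply,
      smul_eq_mul, sub_mul, add_mul, one_mul, Finset.sum_sub_distrib, Finset.sum_add_distrib]
    simp [mul_add, Finset.mul_sum, add_comm]
  unfold quadForm bil
  change ∑ i, x i * (MAk (G.adjMatrix ℝ) k).mulVec (fun i => x i) i = _
  simp only [h, mul_sub, Finset.sum_sub_distrib, ← Finset.sum_mul]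
  congr 1
  rw [Finset.mul_sum]
  exact Finset.sum_congr rfl fun i _ => by ring

section
variable {n : ℕ} (G : SimpleGraph (Fin n)) [DecidableRel G.Adj] (k : ℝ)

lemma nbr_add (x y : Fin n → ℝ) (t : ℝ) (i : Fin n) :
    nbr G (fun i => x i + t * y i) i = nbr G x i + t * nbr G y i := by
  have : ∀ j, (if G.Adj i j then x j + t * y j else 0)
      = (if G.Adj i j then x j else 0) + t * (if G.Adj i j then y j else 0) := by
    intro j; split_ifs <;> simp
  simp only [nbr, this, Finset.sum_add_distrib, ← Finset.mul_sum]
  ring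

lemma nbr_symm (x y : Fin n → ℝ) : ∑ i, x i * nbr G y i = ∑ i, y i * nbr G x i := by
  simp only [nbr, mul_add, Finset.sum_add_distrib, Finset.mul_sum]
  congr 1
  · exact Finset.sum_congr rfl fun i _ => mul_comm _ _
  · rw [Finset.sum_comm]
    refine Finset.sum_congr rfl fun i _ => Finset.sum_congr rfl fun j _ => ?_
    simp only [G.adj_comm i j]
    split_ifs <;> ring

lemma nn_expand (x y : Fin n → ℝ) (t : ℝ) :
    ∑ i, (x i + t * y i) * nbr G (fun i => x i + t * y i) i
      = ∑ i, x i * nbr G x i + 2 * t * ∑ i, y i * nbr G x i + t ^ 2 * ∑ i, y i * nbr G y i := by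
  have e : ∀ i, (x i + t * y i) * nbr G (fun i => x i + t * y i) i
      = x i * nbr G x i + t * (x i * nbr G y i) + t * (y i * nbr G x i)
        + t ^ 2 * (y i * nbr G y i) := by
    intro i; rw [nbr_add]; ring
  simp only [e, Finset.sum_add_distrib, ← Finset.mul_sum]
  rw [nbr_symm G x y]; ring

lemma bil_expand (x y : Fin n → ℝ) (t : ℝ) :
    bil G k (fun i => x i + t * y i) (fun i => x i + t * y i)
      = bil G k x x + t * (2 * bil G k y x) + t ^ 2 * bil G k y y := by
  unfold bil
  rw [nn_expand]
  simp only [Finset.sum_add_distrib, ← Finset.mul_sum]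
  ring

lemma nbr_single (a i : Fin n) :
    nbr G (Pi.single a 1) i = (if i = a then 1 else 0) + if G.Adj i a then 1 else 0 := by
  unfold nbr
  congr 1
  · simp [Pi.single_apply]
  · rw [Finset.sum_eq_single a]
    · simp
    · intro b _ hb; simp [hb]
    · simp

lemma sum_single_mul (a : Fin n) (y : Fin n → ℝ) :
    ∑ i, (Pi.single a (1:ℝ) : Fin n → ℝ) i * y i = y a := by
  simp [Pi.single_apply]

/-- Motzkin and Straus. -/
lemma motzkin (α : ℕ) (hα : ∀ s : Finset (Fin n), (∀ i ∈ s, ∀ j ∈ s, i ≠ j → ¬ G.Adj i j) →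
    s.card ≤ α) : ∀ (m : ℕ) (x : Fin n → ℝ), (∀ i, 0 ≤ x i) →
    (univ.filter fun i => x i ≠ 0).card ≤ m →
    (∑ i, x i) ^ 2 ≤ α * ∑ i, x i * nbr G x i := by
  intro m
  induction m with
  | zero =>
    intro x hx hc
    have : ∀ i, x i = 0 := by
      intro i
      by_contra h
      have hmem : i ∈ univ.filter fun i => x i ≠ 0 := by simp [h]
      have := Finset.card_pos.2 ⟨i, hmem⟩
      omega
    simp [this]
  | succ m ih =>
    intro x hx hc
    by_cases hs : ∀ i ∈ univ.filter (fun i => x i ≠ 0), ∀ j ∈ univ.filter (fun i => x i ≠ 0),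
        i ≠ j → ¬ G.Adj i j
    · have h1 := hα _ hs
      set s := univ.filter (fun i => x i ≠ 0) with hsdef
      have h2 : ∑ i, x i = ∑ i ∈ s, x i := by
        rw [hsdef, Finset.sum_filter_ne_zero]
      have h3 := sq_sum_le_card_mul_sum_sq (s := s) (f := x)
      have h4 : ∑ i ∈ s, x i ^ 2 ≤ ∑ i, x i * nbr G x i := by
        calc ∑ i ∈ s, x i ^ 2 ≤ ∑ i, x i ^ 2 :=
              Finset.sum_le_sum_of_subset_of_nonneg (Finset.subset_univ _)
                fun i _ _ => sq_nonneg _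
          _ ≤ _ := by
            refine Finset.sum_le_sum fun i _ => ?_
            rw [sq]
            refine mul_le_mul_of_nonneg_left ?_ (hx i)
            unfold nbr
            have : 0 ≤ ∑ j, if G.Adj i j then x j else 0 :=
              Finset.sum_nonneg fun j _ => by split_ifs; exacts [hx j, le_rfl]
            linarith
      rw [h2]
      have h5 : 0 ≤ ∑ i ∈ s, x i ^ 2 := Finset.sum_nonneg fun i _ => sq_nonneg _
      calc _ ≤ (s.card : ℝ) * ∑ i ∈ s, x i ^ 2 := h3
        _ ≤ (α : ℝ) * ∑ i ∈ s, x i ^ 2 :=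
          mul_le_mul_of_nonneg_right (by exact_mod_cast h1) h5
        _ ≤ _ := mul_le_mul_of_nonneg_left h4 (by positivity)
    · push Not at hs
      obtain ⟨a, ha, b, hb, hab, hadj⟩ := hs
      simp only [Finset.mem_filter, Finset.mem_univ, true_and] at ha hb
      -- wlog on the order of the two values
      have key : ∀ a b : Fin n, x a ≠ 0 → x b ≠ 0 → a ≠ b → G.Adj a b →
          nbr G x b ≤ nbr G x a → (∑ i, x i) ^ 2 ≤ α * ∑ i, x i * nbr G x i := by
        intro a b ha hb hab hadj hle
        set d : Fin n → ℝ := fun i => (Pi.single b (1:ℝ) : Fin n → ℝ) i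
          + (-1) * (Pi.single a (1:ℝ) : Fin n → ℝ) i with hd
        have hdm : ∀ y : Fin n → ℝ, ∑ i, d i * y i = y b - y a := by
          intro y
          simp only [hd, add_mul, Finset.sum_add_distrib, mul_assoc, ← Finset.mul_sum,
            sum_single_mul]
          ring
        have hds : ∑ i, d i = 0 := by simpa using hdm (fun _ => 1)
        have hdd : ∑ i, d i * nbr G d i = 0 := by
          rw [hdm]
          simp only [hd, nbr_add, nbr_single]
          simp [hab, hab.symm, hadj, hadj.symm]
        have hda : d a = -1 := by simp [hd, hab]
        have hdb : d b = 1 := by simp [hd, hab.symm]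
        have hdo : ∀ i, i ≠ a → i ≠ b → d i = 0 := by
          intro i h1 h2; simp [hd, h1, h2]
        have hx' : ∀ i, 0 ≤ x i + x a * d i := by
          intro i
          by_cases h1 : i = a
          · subst h1; rw [hda]; linarith
          by_cases h2 : i = b
          · subst h2; rw [hdb]; linarith [hx i, hx a]
          rw [hdo i h1 h2]; linarith [hx i]
        have hcard : (univ.filter fun i => x i + x a * d i ≠ 0).card ≤ m := by
          have : (univ.filter fun i => x i + x a * d i ≠ 0) ⊆
              (univ.filter fun i => x i ≠ 0).erase a := by
            intro i hi
            simp only [Finset.mem_filter, Finset.mem_univ, true_and, Finset.mem_erase] at hi ⊢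
            have h1 : i ≠ a := by
              rintro rfl; apply hi; rw [hda]; ring
            refine ⟨h1, ?_⟩
            by_cases h2 : i = b
            · subst h2; exact hb
            rw [hdo i h1 h2] at hi
            simpa using hi
          have h2 := Finset.card_le_card this
          rw [Finset.card_erase_of_mem (by simp [ha])] at h2
          omega
        have := ih (fun i => x i + x a * d i) hx' hcard
        rw [nn_expand, hdd, hdm, Finset.sum_add_distrib, ← Finset.mul_sum, hds] at this
        rw [mul_zero, add_zero] at this
        refine this.trans (mul_le_mul_of_nonneg_left ?_ (by positivity))
        nlinarith [hx a]
      rcases le_total (nbr G x b) (nbr G x a) with h | h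
      · exact key a b ha hb hab hadj h
      · exact key b a hb ha hab.symm hadj.symm h

lemma local_dir (xm : EuclideanSpace ℝ (Fin n))
    (h : IsLocalMinimizer (quadForm (MAk (G.adjMatrix ℝ) k))
        {x : EuclideanSpace ℝ (Fin n) | ∀ i, 0 ≤ x i} xm)
    (d : Fin n → ℝ) (hd : ∀ i, xm i = 0 → 0 ≤ d i) :
    0 ≤ bil G k d (fun i => xm i) ∧ (bil G k d (fun i => xm i) = 0 → 0 ≤ bil G k d d) := by
  obtain ⟨hm, ε, hε, h⟩ := h
  simp only [Set.mem_setOf_eq] at hm h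
  have e1 : ∀ᶠ t : ℝ in 𝓝[>] 0, ∀ i, 0 ≤ xm i + t * d i := by
    rw [Filter.eventually_all]
    intro i
    rcases (hm i).eq_or_lt with h0 | h0
    · filter_upwards [self_mem_nhdsWithin] with t ht
      rw [← h0, zero_add]
      exact mul_nonneg (le_of_lt ht) (hd i h0.symm)
    · apply eventually_nhdsWithin_of_eventually_nhds
      have hc : Continuous fun t : ℝ => xm i + t * d i := by fun_prop
      have := hc.tendsto 0
      simp only [zero_mul, add_zero] at this
      exact (this.eventually_const_lt h0).mono fun t ht => ht.le
  have e2 : ∀ᶠ t : ℝ in 𝓝[>] 0, ‖(xm + t • WithLp.toLp 2 d) - xm‖ ≤ ε := by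
    apply eventually_nhdsWithin_of_eventually_nhds
    have hc : Continuous fun t : ℝ => ‖(xm + t • WithLp.toLp 2 d) - xm‖ := by fun_prop
    have := hc.tendsto 0
    simp only [zero_smul, add_zero, sub_self, norm_zero] at this
    exact (this.eventually_lt_const hε).mono fun t ht => ht.le
  have e3 : ∀ᶠ t : ℝ in 𝓝[>] 0,
      0 < t ∧ 0 ≤ 2 * bil G k d (fun i => xm i) + t * bil G k d d := by
    filter_upwards [e1, e2, self_mem_nhdsWithin] with t h1 h2 h3
    have h3 : 0 < t := h3
    refine ⟨h3, ?_⟩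
    have := h (xm + t • WithLp.toLp 2 d) (by simpa using h1) h2
    rw [quadForm_eq, quadForm_eq] at this
    have e : (fun i => (xm + t • WithLp.toLp 2 d) i) = fun i => xm i + t * d i := by
      ext i; simp
    rw [e, bil_expand] at this
    have h4 : 0 ≤ t * (2 * bil G k d (fun i => xm i) + t * bil G k d d) := by nlinarith
    exact nonneg_of_mul_nonneg_right h4 h3
  constructor
  · have hc : Continuous fun t : ℝ => 2 * bil G k d (fun i => xm i) + t * bil G k d d := by
      fun_prop
    have h5 := (hc.tendsto 0).mono_left (nhdsWithin_le_nhds (s := Set.Ioi 0))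
    have := ge_of_tendsto h5 (e3.mono fun t ht => ht.2)
    simp only [zero_mul, add_zero] at this
    linarith
  · intro h0
    obtain ⟨t, ht, h6⟩ := e3.exists
    rw [h0, mul_zero, zero_add] at h6
    exact nonneg_of_mul_nonneg_right h6 ht

lemma bil_neg (d x : Fin n → ℝ) : bil G k (fun i => - d i) x = - bil G k d x := by
  simp only [bil, neg_mul, Finset.sum_neg_distrib]; ring

lemma local_supp (xm : EuclideanSpace ℝ (Fin n))
    (h : IsLocalMinimizer (quadForm (MAk (G.adjMatrix ℝ) k))
        {x : EuclideanSpace ℝ (Fin n) | ∀ i, 0 ≤ x i} xm)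
    (d : Fin n → ℝ) (hd : ∀ i, xm i = 0 → d i = 0) :
    bil G k d (fun i => xm i) = 0 ∧ 0 ≤ bil G k d d := by
  obtain ⟨h1, h2⟩ := local_dir G k xm h d fun i hi => (hd i hi).ge
  obtain ⟨h3, -⟩ := local_dir G k xm h (fun i => - d i) fun i hi => by simp [hd i hi]
  rw [bil_neg] at h3
  have h0 : bil G k d (fun i => xm i) = 0 := by linarith
  exact ⟨h0, h2 h0⟩

lemma local_zero (hk : 0 < k) (hk' : ∀ m : ℤ, (m : ℝ) ≠ k) (xm : EuclideanSpace ℝ (Fin n))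
    (h : IsLocalMinimizer (quadForm (MAk (G.adjMatrix ℝ) k))
        {x : EuclideanSpace ℝ (Fin n) | ∀ i, 0 ≤ x i} xm) (i : Fin n) : xm i = 0 := by
  classical
  by_contra hne
  have hm : ∀ i, 0 ≤ xm i := h.1
  set σ := ∑ i, xm i with hσ
  have hσpos : 0 < σ := Finset.sum_pos' (fun i _ => hm i)
    ⟨i, Finset.mem_univ i, lt_of_le_of_ne (hm i) (Ne.symm hne)⟩
  have hkkt : ∀ a, xm a ≠ 0 → k * nbr G (fun i => xm i) a = σ := by
    intro a ha
    have := (local_supp G k xm h (Pi.single a 1) (by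
      intro i hi
      have : i ≠ a := by rintro rfl; exact ha hi
      simp [this])).1
    unfold bil at this
    rw [sum_single_mul] at this
    have h1 : ∑ i, (Pi.single a (1:ℝ) : Fin n → ℝ) i = 1 := by simp
    rw [h1] at this
    linarith
  -- no induced path on three vertices
  have hP3 : ∀ a b c, xm a ≠ 0 → xm b ≠ 0 → xm c ≠ 0 → G.Adj a b → G.Adj b c → a ≠ c →
      G.Adj a c := by
    intro a b c ha hb hc hab hbc hac
    by_contra hnac
    have hnca : ¬ G.Adj c a := fun h => hnac h.symm
    have := (local_supp G k xm h (fun i => ((Pi.single a (1:ℝ) : Fin n → ℝ) i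
        + (-1) * (Pi.single b (1:ℝ) : Fin n → ℝ) i) + 1 * (Pi.single c (1:ℝ) : Fin n → ℝ) i) (by
      intro i hi
      have h1 : i ≠ a := by rintro rfl; exact ha hi
      have h2 : i ≠ b := by rintro rfl; exact hb hi
      have h3 : i ≠ c := by rintro rfl; exact hc hi
      simp [h1, h2, h3])).2
    unfold bil at this
    simp only [add_mul, Finset.sum_add_distrib, mul_assoc, ← Finset.mul_sum,
      sum_single_mul, nbr_add, nbr_single] at this
    simp [hab.ne, hbc.ne, hac, hab.ne.symm, hbc.ne.symm, hac.symm, hab, hbc, hab.symm, hbc.symm,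
      hnac, hnca] at this
    linarith
  -- a maximal stable subset of the support
  let P : Finset (Fin n) → Prop := fun T =>
    (∀ a ∈ T, xm a ≠ 0) ∧ ∀ a ∈ T, ∀ b ∈ T, a ≠ b → ¬ G.Adj a b
  obtain ⟨T, hT, hTmax⟩ := Finset.exists_max_image (univ.filter P) Finset.card
    ⟨∅, by simp [P]⟩
  simp only [Finset.mem_filter, Finset.mem_univ, true_and] at hT hTmax
  have hdom : ∀ j, xm j ≠ 0 → ∃ a ∈ T, a = j ∨ G.Adj a j := by
    intro j hj
    by_contra hcon
    push Not at hcon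
    have hjT : j ∉ T := fun hjT => (hcon j hjT).1 rfl
    have := hTmax (insert j T) (by
      refine ⟨?_, ?_⟩
      · intro a ha
        rcases Finset.mem_insert.1 ha with rfl | ha
        exacts [hj, hT.1 a ha]
      · intro a ha b hb hab
        rcases Finset.mem_insert.1 ha with ha' | ha' <;>
          rcases Finset.mem_insert.1 hb with hb' | hb'
        · exact absurd (ha'.trans hb'.symm) hab
        · rw [ha']; exact fun h => (hcon b hb').2 h.symm
        · rw [hb']; exact (hcon a ha').2
        · exact hT.2 a ha' b hb' hab)
    rw [Finset.card_insert_of_notMem hjT] at this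
    omega
  have hcol : ∀ j, ∑ a ∈ T, ((if a = j then xm j else 0) + if G.Adj a j then xm j else 0)
      = xm j := by
    intro j
    by_cases hj : xm j = 0
    · simp [hj]
    obtain ⟨a, haT, ha⟩ := hdom j hj
    rw [Finset.sum_eq_single a]
    · rcases ha with rfl | ha
      · simp
      · simp [ha, ha.ne]
    · intro b hbT hba
      have hnba := hT.2 b hbT a haT hba
      have h1 : b ≠ j := by
        rintro rfl
        rcases ha with rfl | ha
        exacts [hba rfl, hnba ha.symm]
      have h2 : ¬ G.Adj b j := by
        intro hbj
        rcases ha with rfl | ha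
        · exact hnba hbj
        · exact hnba (hP3 b j a (hT.1 b hbT) hj (hT.1 a haT) hbj ha.symm hba)
      simp [h1, h2]
    · exact fun h => absurd haT h
  have hsum : ∑ a ∈ T, nbr G (fun i => xm i) a = σ := by
    have : ∀ a, nbr G (fun i => xm i) a
        = ∑ j, ((if a = j then xm j else 0) + if G.Adj a j then xm j else 0) := by
      intro a
      rw [Finset.sum_add_distrib]; simp [nbr]
    simp only [this]
    rw [Finset.sum_comm, hσ]
    exact Finset.sum_congr rfl fun j _ => hcol j
  have hfin : k * σ = T.card * σ := by
    rw [← hsum, Finset.mul_sum, hsum, Finset.sum_congr rfl fun a ha => hkkt a (hT.1 a ha)]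
    simp
  have := mul_right_cancel₀ hσpos.ne' hfin
  exact hk' T.card (by rw [this]; simp)

end

end Helpers

/-- For `k > 0` noninteger, the quadratic form `q_{A,k}(x) = xᵀ(kA + kI - J)x` has a local
minimizer over the nonnegative orthant iff `α(G) < k`. -/
theorem qAk_has_localMinimizer_iff {n : ℕ} (G : SimpleGraph (Fin n)) [DecidableRel G.Adj]
    (k : ℝ) (hk : 0 < k) (hk' : ∀ m : ℤ, (m : ℝ) ≠ k) :
    (∃ xm, IsLocalMinimizer (quadForm (MAk (G.adjMatrix ℝ) k))
        {x : EuclideanSpace ℝ (Fin n) | ∀ i, 0 ≤ x i} xm) ↔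
      (stabilityNumber G : ℝ) < k := by
  have hbdd : BddAbove {k | ∃ s : Finset (Fin n), s.card = k ∧
      ∀ i ∈ s, ∀ j ∈ s, i ≠ j → ¬ G.Adj i j} := by
    refine ⟨n, ?_⟩
    rintro m ⟨s, rfl, -⟩
    simpa using Finset.card_le_univ s
  have hα : ∀ s : Finset (Fin n), (∀ i ∈ s, ∀ j ∈ s, i ≠ j → ¬ G.Adj i j) →
      s.card ≤ stabilityNumber G := fun s hs => le_csSup hbdd ⟨s, rfl, hs⟩
  constructor
  · rintro ⟨xm, h⟩
    have hz := local_zero G k hk hk' xm h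
    obtain ⟨s, hs, hst⟩ : stabilityNumber G ∈ {k | ∃ s : Finset (Fin n), s.card = k ∧
      ∀ i ∈ s, ∀ j ∈ s, i ≠ j → ¬ G.Adj i j} := Nat.sSup_mem ⟨0, ∅, by simp⟩ hbdd
    rw [← hs]
    have hz' : (fun i => xm i) = fun _ => 0 := funext hz
    have h2 := (local_dir G k xm h (fun i => if i ∈ s then 1 else 0)
      (fun i _ => by split_ifs <;> simp)).2 (by rw [hz']; simp [bil, nbr])
    have hn : ∀ i ∈ s, nbr G (fun i => if i ∈ s then 1 else 0) i = 1 := by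
      intro i hi
      unfold nbr
      rw [Finset.sum_eq_zero]
      · simp [hi]
      · intro j _
        by_cases hj : j ∈ s
        · by_cases hij : i = j
          · subst hij; simp
          · simp [hst i hi j hj hij]
        · simp [hj]
    unfold bil at h2
    simp only [ite_mul, one_mul, zero_mul, Finset.sum_ite_mem, Finset.univ_inter] at h2
    rw [Finset.sum_congr rfl hn] at h2
    simp only [Finset.sum_const, nsmul_eq_mul, mul_one] at h2
    have h3 : (s.card : ℝ) ≠ k := by simpa using hk' s.card
    rcases Nat.eq_zero_or_pos s.card with h0 | h0
    · rw [h0]; simpa using hk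
    · have h0' : (0:ℝ) < s.card := by exact_mod_cast h0
      refine lt_of_le_of_ne ?_ h3
      by_contra hlt
      push Not at hlt
      nlinarith
  · intro hlt
    refine ⟨0, by simp, 1, one_pos, ?_⟩
    intro x hx _
    rw [quadForm_eq, quadForm_eq]
    have h0 : bil G k (fun i => (0 : EuclideanSpace ℝ (Fin n)) i)
        (fun i => (0 : EuclideanSpace ℝ (Fin n)) i) = 0 := by simp [bil]
    rw [h0]
    have hx : ∀ i, 0 ≤ x i := hx
    have h1 := motzkin G _ hα _ (fun i => x i) hx le_rfl
    have h2 : 0 ≤ ∑ i, x i * nbr G (fun i => x i) i := by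
      refine Finset.sum_nonneg fun i _ => mul_nonneg (hx i) ?_
      unfold nbr
      refine add_nonneg (hx i) (Finset.sum_nonneg fun j _ => ?_)
      split_ifs
      exacts [hx j, le_rfl]
    unfold bil
    have h3 := mul_le_mul_of_nonneg_right hlt.le h2
    nlinarith
end

section
/- Let G be a graph on n vertices with adjacency matrix A and stability number α(G), let k > 0 be a noninteger real scalar with α(G) > k, and let C > 0 be a real scalar. Then every local minimizer x̄ of the quadratic form q_{A,k}(x) := x^T (kA + kI - J) x over the polytope {x ∈ ℝ^n : x ≥ 0, Σ_{i=1}^n x_i ≤ C} satisfies Σ_{i=1}^n x̄_i = C. -/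
open Matrix
open scoped RealInnerProductSpace

open Filter Topology in
theorem aux_dir {n : ℕ} (M : Matrix (Fin n) (Fin n) ℝ) (hM : M.IsSymm) (C : ℝ)
    (xm : EuclideanSpace ℝ (Fin n))
    (h : IsLocalMinimizer (quadForm M)
        {x : EuclideanSpace ℝ (Fin n) | (∀ i, 0 ≤ x i) ∧ ∑ i, x i ≤ C} xm)
    (hs : ∑ i, xm i < C) (y : Fin n → ℝ) (hy : ∀ i, xm i = 0 → 0 ≤ y i) :
    ∃ t > 0, 0 ≤ 2 * (y ⬝ᵥ M.mulVec xm) + t * (y ⬝ᵥ M.mulVec y) ∧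
      ∀ s, 0 < s → s ≤ t → 0 ≤ 2 * (y ⬝ᵥ M.mulVec xm) + s * (y ⬝ᵥ M.mulVec y) := by
  obtain ⟨⟨h0, -⟩, ε, hε, hmin⟩ := h
  have e1 : ∀ᶠ t : ℝ in 𝓝 0, ∀ i, 0 ≤ t → 0 ≤ xm i + t * y i := by
    rw [eventually_all]
    intro i
    rcases (h0 i).eq_or_lt with hi | hi
    · refine Eventually.of_forall fun t ht => ?_
      have := hy i hi.symm
      rw [← hi]; positivity
    · have : Tendsto (fun t : ℝ => xm i + t * y i) (𝓝 0) (𝓝 (xm i + 0 * y i)) :=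
        Continuous.tendsto (by fun_prop) 0
      rw [zero_mul, add_zero] at this
      filter_upwards [this.eventually (lt_mem_nhds hi)] with t ht _ using ht.le
  have e2 : ∀ᶠ t : ℝ in 𝓝 0, ∑ i, (xm i + t * y i) < C := by
    have : Tendsto (fun t : ℝ => ∑ i, (xm i + t * y i)) (𝓝 0) (𝓝 (∑ i, (xm i + 0 * y i))) :=
      Continuous.tendsto (by fun_prop) 0
    simp only [zero_mul, add_zero] at this
    exact this.eventually (gt_mem_nhds hs)
  have e3 : ∀ᶠ t : ℝ in 𝓝 0, ‖(xm + t • WithLp.toLp 2 y) - xm‖ < ε := by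
    have : Tendsto (fun t : ℝ => ‖(xm + t • WithLp.toLp 2 y) - xm‖) (𝓝 0)
        (𝓝 ‖(xm + (0:ℝ) • WithLp.toLp 2 y) - xm‖) :=
      Continuous.tendsto (by fun_prop) 0
    simp only [zero_smul, add_zero, sub_self, norm_zero] at this
    exact this.eventually (gt_mem_nhds hε)
  have e := (e1.and (e2.and e3))
  rw [Metric.eventually_nhds_iff] at e
  obtain ⟨δ, hδ, H⟩ := e
  have key : ∀ s, 0 < s → s ≤ δ / 2 →
      0 ≤ 2 * (y ⬝ᵥ M.mulVec xm) + s * (y ⬝ᵥ M.mulVec y) := by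
    intro s hs0 hs1
    obtain ⟨a, b, c⟩ := @H s (by rw [Real.dist_eq, sub_zero, abs_of_pos hs0]; linarith)
    have := hmin (xm + s • WithLp.toLp 2 y)
      ⟨fun i => by simpa using a i hs0.le, by simpa using b.le⟩ c.le
    have hsym : xm.ofLp ⬝ᵥ M.mulVec y = y ⬝ᵥ M.mulVec xm := by
      rw [Matrix.dotProduct_mulVec, ← Matrix.mulVec_transpose, hM.eq, dotProduct_comm]
    simp only [quadForm, WithLp.ofLp_add, WithLp.ofLp_smul, Matrix.mulVec_add,
      Matrix.mulVec_smul, add_dotProduct, dotProduct_add, smul_dotProduct, dotProduct_smul,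
      smul_eq_mul, hsym] at this
    have h2 : 0 ≤ s * (2 * (y ⬝ᵥ M.mulVec xm) + s * (y ⬝ᵥ M.mulVec y)) := by linarith
    exact nonneg_of_mul_nonneg_right h2 hs0
  exact ⟨δ / 2, by linarith, key _ (by linarith) le_rfl, key⟩

theorem aux_dir2 {n : ℕ} (M : Matrix (Fin n) (Fin n) ℝ) (hM : M.IsSymm) (C : ℝ)
    (xm : EuclideanSpace ℝ (Fin n))
    (h : IsLocalMinimizer (quadForm M)
        {x : EuclideanSpace ℝ (Fin n) | (∀ i, 0 ≤ x i) ∧ ∑ i, x i ≤ C} xm)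
    (hs : ∑ i, xm i < C) (y : Fin n → ℝ) (hy : ∀ i, xm i = 0 → y i = 0) :
    y ⬝ᵥ M.mulVec xm = 0 ∧ 0 ≤ y ⬝ᵥ M.mulVec y := by
  obtain ⟨t, ht, h1, h2⟩ := aux_dir M hM C xm h hs y (fun i hi => (hy i hi).ge)
  obtain ⟨t', ht', h1', h2'⟩ := aux_dir M hM C xm h hs (-y) (fun i hi => by simp [hy i hi])
  simp only [neg_dotProduct, Matrix.mulVec_neg, dotProduct_neg, neg_neg] at h1' h2'
  set a := y ⬝ᵥ M.mulVec xm
  set b := y ⬝ᵥ M.mulVec y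
  have hb : 0 ≤ b := by
    by_contra hb
    push Not at hb
    nlinarith [mul_neg_of_pos_of_neg ht hb, mul_neg_of_pos_of_neg ht' hb]
  refine ⟨?_, hb⟩
  by_contra ha
  have hpos : 0 < |a| := abs_pos.mpr ha
  set s := min (min t t') (|a| / (b + 1))
  have hs0 : 0 < s := by positivity
  have k1 := h2 s hs0 ((min_le_left _ _).trans (min_le_left _ _))
  have k2 := h2' s hs0 ((min_le_left _ _).trans (min_le_right _ _))
  have k3 : s * (b + 1) ≤ |a| := (le_div_iff₀ (by positivity)).1 (min_le_right _ _)
  rcases abs_cases a with ⟨h, _⟩ | ⟨h, _⟩ <;> rw [h] at k3 hpos <;> nlinarith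

theorem localMinimizer_on_hyperplane {n : ℕ} (G : SimpleGraph (Fin n)) [DecidableRel G.Adj]
    (k : ℝ) (hk : 0 < k) (hk' : ∀ m : ℤ, (m : ℝ) ≠ k) (hα : (stabilityNumber G : ℝ) > k)
    (C : ℝ) (hC : 0 < C) :
    ∀ xm, IsLocalMinimizer (quadForm (MAk (G.adjMatrix ℝ) k))
        {x : EuclideanSpace ℝ (Fin n) | (∀ i, 0 ≤ x i) ∧ ∑ i, x i ≤ C} xm →
      ∑ i, xm i = C := by
  classical
  intro xm h
  by_contra hne
  have h0 : ∀ i, 0 ≤ xm i := h.1.1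
  have hs : ∑ i, xm i < C := lt_of_le_of_ne h.1.2 hne
  set M := MAk (G.adjMatrix ℝ) k with hMdef
  have Mapp : ∀ i j, M i j = k * (if G.Adj i j ∨ i = j then 1 else 0) - 1 := by
    intro i j
    by_cases hij : i = j
    · subst hij; simp [hMdef, MAk]
    · simp [hMdef, MAk, Matrix.one_apply, hij, SimpleGraph.adjMatrix_apply]
  have hM : M.IsSymm := by
    ext i j
    simp only [Matrix.transpose_apply, Mapp, G.adj_comm j i, eq_comm (a := j)]
  clear_value M
  -- first order condition
  have F : ∀ i, xm i ≠ 0 →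
      k * ∑ j, (if G.Adj i j ∨ i = j then xm j else 0) = ∑ j, xm j := by
    intro i hi
    have := (aux_dir2 M hM C xm h hs (Pi.single i 1) (fun j hj => by
      rw [Pi.single_apply, if_neg]; rintro rfl; exact hi hj)).1
    rw [single_dotProduct, one_mul, Matrix.mulVec, dotProduct] at this
    simp only [Mapp, sub_mul, one_mul, Finset.sum_sub_distrib, mul_assoc, ite_mul, zero_mul] at this
    rw [← Finset.mul_sum] at this
    linarith
  -- transitivity on the support
  have T : ∀ i j l, xm i ≠ 0 → xm j ≠ 0 → xm l ≠ 0 → G.Adj i j → G.Adj j l → i ≠ l →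
      G.Adj i l := by
    intro i j l hi hj hl hij hjl hil
    by_contra hnil
    have := (aux_dir2 M hM C xm h hs (Pi.single i 1 + Pi.single l 1 - Pi.single j 2)
      (fun m hm => by
        have a : m ≠ i := by rintro rfl; exact hi hm
        have b : m ≠ j := by rintro rfl; exact hj hm
        have c : m ≠ l := by rintro rfl; exact hl hm
        simp [a, b, c])).2
    have n1 : ¬ G.Adj l i := fun h => hnil h.symm
    simp [Matrix.mulVec_add, Matrix.mulVec_sub, add_dotProduct, sub_dotProduct, Mapp, hij, hjl,
      hij.symm, hjl.symm, hnil, n1, hil, hil.symm] at this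
    linarith
  by_cases hz : ∀ i, xm i = 0
  · -- zero case
    have hmem : stabilityNumber G ∈ {k | ∃ s : Finset (Fin n), s.card = k ∧
        ∀ i ∈ s, ∀ j ∈ s, i ≠ j → ¬ G.Adj i j} := by
      apply Nat.sSup_mem
      · exact ⟨0, ∅, by simp⟩
      · refine ⟨n, ?_⟩
        rintro _ ⟨s, rfl, -⟩
        simpa using Finset.card_le_univ s
    obtain ⟨S, hS, hst⟩ := hmem
    rw [← hS] at hα
    obtain ⟨t, ht, h1, -⟩ := aux_dir M hM C xm h hs (fun i => if i ∈ S then 1 else 0)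
      (fun i _ => by split_ifs <;> norm_num)
    have hx : xm.ofLp = 0 := funext hz
    rw [hx, Matrix.mulVec_zero, dotProduct_zero, mul_zero, zero_add] at h1
    have h2 := nonneg_of_mul_nonneg_right h1 ht
    have : (fun i => if i ∈ S then (1:ℝ) else 0) ⬝ᵥ M.mulVec (fun i => if i ∈ S then 1 else 0)
        = S.card * (k - S.card) := by
      simp only [dotProduct, Matrix.mulVec, ite_mul, one_mul, zero_mul, mul_ite, mul_one, mul_zero,
        Finset.sum_ite_mem, Finset.univ_inter]
      rw [← nsmul_eq_mul, ← Finset.sum_const]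
      refine Finset.sum_congr rfl fun i hi => ?_
      have : ∀ j ∈ S, M i j = (if i = j then k else 0) - 1 := by
        intro j hj
        rw [Mapp]
        by_cases hij : i = j
        · simp [hij]
        · simp [hij, hst i hi j hj hij]
      rw [Finset.sum_congr rfl this]
      simp [hi]
    rw [this] at h2
    nlinarith
  · push Not at hz
    obtain ⟨i0, hi0⟩ := hz
    have hpos : 0 < ∑ i, xm i :=
      Finset.sum_pos' (fun i _ => h0 i) ⟨i0, Finset.mem_univ _, lt_of_le_of_ne (h0 i0) hi0.symm⟩
    -- maximal stable subset of the support
    obtain ⟨S, hSm⟩ := Finset.exists_maximal (s := Finset.univ.filter fun s : Finset (Fin n) =>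
        (∀ i ∈ s, xm i ≠ 0) ∧ ∀ i ∈ s, ∀ j ∈ s, i ≠ j → ¬ G.Adj i j) ⟨∅, by simp⟩
    have hS := hSm.prop
    simp only [Finset.mem_filter, Finset.mem_univ, true_and] at hS
    obtain ⟨hS1, hS2⟩ := hS
    have U : ∀ j, xm j ≠ 0 → ∃ t ∈ S, ∀ s ∈ S, (G.Adj s j ∨ s = j) ↔ s = t := by
      intro j hj
      have ex : ∃ t ∈ S, G.Adj t j ∨ t = j := by
        by_contra hcon
        push Not at hcon
        have hins := hSm.le_of_ge (y := insert j S) (by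
          simp only [Finset.mem_filter, Finset.mem_univ, true_and, Finset.mem_insert]
          refine ⟨?_, ?_⟩
          · rintro i (rfl | hi)
            exacts [hj, hS1 i hi]
          · rintro i (rfl | hi) l (rfl | hl) hil
            · exact absurd rfl hil
            · exact fun h => (hcon l hl).1 h.symm
            · exact (hcon i hi).1
            · exact hS2 i hi l hl hil) (Finset.subset_insert j S)
        exact (hcon j (hins (Finset.mem_insert_self j S))).2 rfl
      obtain ⟨t, ht, htj⟩ := ex
      refine ⟨t, ht, fun s hs => ⟨fun hsj => ?_, by rintro rfl; exact htj⟩⟩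
      by_contra hst
      apply hS2 s hs t ht hst
      rcases hsj with a | rfl
      · rcases htj with b | rfl
        · exact T s j t (hS1 s hs) hj (hS1 t ht) a b.symm hst
        · exact a
      · rcases htj with b | rfl
        · exact b.symm
        · exact absurd rfl hst
    have e1 : ∑ t ∈ S, k * ∑ j, (if G.Adj t j ∨ t = j then xm j else 0)
        = S.card * ∑ j, xm j := by
      rw [Finset.sum_congr rfl fun t ht => F t (hS1 t ht), Finset.sum_const, nsmul_eq_mul]
    have e2 : ∑ t ∈ S, k * ∑ j, (if G.Adj t j ∨ t = j then xm j else 0)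
        = k * ∑ j, xm j := by
      rw [← Finset.mul_sum, Finset.sum_comm]
      congr 1
      refine Finset.sum_congr rfl fun j _ => ?_
      by_cases hj : xm j = 0
      · simp [hj]
      · obtain ⟨t, ht, hU⟩ := U j hj
        rw [Finset.sum_congr rfl fun s hs => if_congr (hU s hs) rfl rfl]
        simp [ht]
    have := mul_right_cancel₀ hpos.ne' (e1.symm.trans e2)
    exact hk' S.card (by exact_mod_cast this)
end
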